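/- Let p be a prime and n ≥ 1, and let M be an analytic submanifold of ℚ_p^n. If some point of M is not very well multiplicatively approximable, then the set of points of M that are not very well multiplicatively approximable has positive measure with respect to the smooth measure class on M. -/

import Mathlib

open MeasureTheory Metric
open scoped ENNReal NNReal

namespace PadicDioph

variable (p : ℕ) [Fact p.Prime]

noncomputable instance : MeasurableSpace ℚ_[p] := borel _
instance : BorelSpace ℚ_[p] := ⟨rfl⟩

/-- Membership in `ℤ[1/p]`, viewed inside `ℚ`. -/
def IsZInvP (q : ℚ) : Prop := ∃ (z : ℤ) (k : ℕ), q = (z : ℚ) / (p : ℚ) ^ k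

/-- Sup norm (max of archimedean absolute values) of a finite tuple of rationals. -/
noncomputable def supNormR {m : ℕ} (q : Fin m → ℚ) : ℝ := ⨆ i, |(q i : ℝ)|

/-- Sup of the `p`-adic absolute values of a finite tuple of rationals. -/
noncomputable def supNormP {m : ℕ} (q : Fin m → ℚ) : ℝ := ⨆ i, ‖((q i : ℚ_[p]))‖

/-- Sup norm of an integer tuple together with an extra integer coordinate. -/
noncomputable def supNormZ {n : ℕ} (q0 : ℤ) (q : Fin n → ℤ) : ℝ :=
  max |(q0 : ℝ)| (⨆ i, |((q i : ℤ) : ℝ)|)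

/-- The classical Diophantine exponent `w(y)` of `y ∈ ℚ_p^n`: the supremum of all `v > 0`
such that `|q₀ + q·y|_p ≤ ‖(q₀,q)‖_∞^{-v}` has infinitely many integer solutions. -/
noncomputable def wExp {n : ℕ} (y : Fin n → ℚ_[p]) : ℝ≥0∞ :=
  ⨆ (v : ℝ) (_ : 0 < v ∧
    {qq : ℤ × (Fin n → ℤ) |
      ‖((qq.1 : ℚ_[p]) + ∑ i, (qq.2 i : ℚ_[p]) * y i)‖ ≤
        (supNormZ qq.1 qq.2) ^ (-v)}.Infinite), ENNReal.ofReal v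

/-- `y` is very well approximable if `w(y) > n + 1`. -/
def IsVWA {n : ℕ} (y : Fin n → ℚ_[p]) : Prop :=
  ENNReal.ofReal ((n : ℝ) + 1) < wExp p y

/-- The defining condition of the exponent `w_p`: there are solutions
`q̃ = (q₀, q) ∈ ℤ[1/p]^{n+1}` of `|q·y + q₀|_p < (‖q‖_p ‖q̃‖_∞)^{-v} ‖q̃‖_∞^{-1}`
with `‖q‖_p ‖q̃‖_∞` arbitrarily large. -/
def WpCond {n : ℕ} (y : Fin n → ℚ_[p]) (v : ℝ) : Prop :=
  ∀ T : ℝ, ∃ (q0 : ℚ) (q : Fin n → ℚ),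
    IsZInvP p q0 ∧ (∀ i, IsZInvP p (q i)) ∧
    T < supNormP p q * supNormR (Fin.cons q0 q) ∧
    ‖(∑ i, (q i : ℚ_[p]) * y i) + (q0 : ℚ_[p])‖ <
      (supNormP p q * supNormR (Fin.cons q0 q)) ^ (-v) * (supNormR (Fin.cons q0 q))⁻¹

/-- The exponent `w_p(y)`. -/
noncomputable def wpExp {n : ℕ} (y : Fin n → ℚ_[p]) : ℝ≥0∞ :=
  ⨆ (v : ℝ) (_ : 0 < v ∧ WpCond p y v), ENNReal.ofReal v

/-- `Π_+` of a tuple of rationals: the product of `|q_i|_∞` over the nonzero coordinates. -/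
noncomputable def piPlusQ {m : ℕ} (q : Fin m → ℚ) : ℝ :=
  ∏ i, (if q i = 0 then 1 else |(q i : ℝ)|)

/-- `Π_+` of `(q₀, q)` with integer coordinates. -/
noncomputable def piPlusZ {n : ℕ} (q0 : ℤ) (q : Fin n → ℤ) : ℝ :=
  (if q0 = 0 then 1 else |(q0 : ℝ)|) * ∏ i, (if q i = 0 then 1 else |((q i : ℤ) : ℝ)|)

/-- `y ∈ ℚ_p^n` is very well multiplicatively approximable. -/
def IsVWMA {n : ℕ} (y : Fin n → ℚ_[p]) : Prop :=
  ∃ ε : ℝ, 0 < ε ∧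
    {qq : ℤ × (Fin n → ℤ) |
      ‖((qq.1 : ℚ_[p]) + ∑ i, (qq.2 i : ℚ_[p]) * y i)‖ ≤
        (piPlusZ qq.1 qq.2) ^ (-(1 + ε))}.Infinite

/-- A measure on `ℚ_p^n` is strongly extremal if almost every point is not VWMA. -/
def StronglyExtremal {n : ℕ} (μ : Measure (Fin n → ℚ_[p])) : Prop :=
  ∀ᵐ y ∂μ, ¬ IsVWMA p y

/-- `δ(g_t u_y D^{n+1})` for the one-parameter flow: `g_t` has `p`-adic component
`diag(p^{-t},1,…,1)` and archimedean component `p^{-t/(n+1)}·Id`. -/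
noncomputable def deltaOne {n : ℕ} (y : Fin n → ℚ_[p]) (t : ℕ) : ℝ :=
  sInf { c : ℝ | ∃ qt : Fin (n + 1) → ℚ, (∀ i, IsZInvP p (qt i)) ∧ qt ≠ 0 ∧
    c = ((p : ℝ) ^ (-(t : ℝ) / ((n : ℝ) + 1)) * supNormR qt) *
        max (‖(((p : ℚ_[p]) ^ t)⁻¹ * ((qt 0 : ℚ_[p]) + ∑ i : Fin n, (qt i.succ : ℚ_[p]) * y i))‖)
            (⨆ i : Fin n, ‖((qt i.succ : ℚ_[p]))‖) }

/-- The exponent `γ(y)`. -/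
noncomputable def gammaExp {n : ℕ} (y : Fin n → ℚ_[p]) : ℝ :=
  sSup {c : ℝ | 0 ≤ c ∧ ∀ N : ℕ, ∃ t : ℕ, N ≤ t ∧
    deltaOne p y t ≤ (p : ℝ) ^ (-(c * (t : ℝ)))}

/-- `δ(g_t u_y D^{n+1})` for the multiparameter flow: for `t = (t₀,…,t_n)` with
`T = Σ tᵢ`, the `p`-adic component of `g_t` is `diag(p^{-T},1,…,1)` and the archimedean
component is `diag(p^{-t₀},…,p^{-t_n})`. -/
noncomputable def deltaMulti {n : ℕ} (y : Fin n → ℚ_[p]) (t : Fin (n + 1) → ℕ) : ℝ :=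
  sInf { c : ℝ | ∃ qt : Fin (n + 1) → ℚ, (∀ i, IsZInvP p (qt i)) ∧ qt ≠ 0 ∧
    c = (⨆ i, (p : ℝ) ^ (-((t i : ℝ))) * |(qt i : ℝ)|) *
        max (‖(((p : ℚ_[p]) ^ (∑ i, t i))⁻¹ *
              ((qt 0 : ℚ_[p]) + ∑ i : Fin n, (qt i.succ : ℚ_[p]) * y i))‖)
            (⨆ i : Fin n, ‖((qt i.succ : ℚ_[p]))‖) }

/-- The support of a measure on a metric space. -/
def measSupp {X : Type*} [MetricSpace X] [MeasurableSpace X] (μ : Measure X) : Set X :=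
  {x | ∀ r : ℝ, 0 < r → 0 < μ (ball x r)}

/-- `‖f‖_{μ,B}`. -/
noncomputable def muSupNorm {X : Type*} [MetricSpace X] [MeasurableSpace X]
    (μ : Measure X) (B : Set X) (f : X → ℚ_[p]) : ℝ :=
  sSup {c : ℝ | 0 < μ {x ∈ B | c < ‖f x‖}}

/-- `f` is `(C, α)`-good on `V` with respect to `μ`. -/
def IsGoodOn {X : Type*} [MetricSpace X] [MeasurableSpace X] (μ : Measure X)
    (C a : ℝ) (V : Set X) (f : X → ℚ_[p]) : Prop :=
  ∀ (x₀ : X) (r : ℝ), 0 < r → x₀ ∈ measSupp μ → ball x₀ r ⊆ V →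
    ∀ ε : ℝ, 0 < ε →
      μ {x ∈ ball x₀ r | ‖f x‖ < ε} ≤
        ENNReal.ofReal (C * (ε / muSupNorm p μ (ball x₀ r) f) ^ a) * μ (ball x₀ r)

/-- A metric space is Besicovitch: any family of balls whose centers exhaust a bounded
set `A` admits a countable subfamily covering `A` with multiplicity at most `N`. -/
def IsBesicovitch (X : Type*) [MetricSpace X] : Prop :=
  ∃ N : ℕ, ∀ (A : Set X), Bornology.IsBounded A →
    ∀ F : Set (X × ℝ), (∀ b ∈ F, 0 < b.2) → (∀ x ∈ A, ∃ r : ℝ, (x, r) ∈ F) →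
      ∃ S ⊆ F, S.Countable ∧ (∀ x ∈ A, ∃ b ∈ S, x ∈ ball b.1 b.2) ∧
        ∀ x : X, {b ∈ S | x ∈ ball b.1 b.2}.encard ≤ N

/-- `μ` is `D`-Federer on the open set `U`. -/
def IsDFedererOn {X : Type*} [MetricSpace X] [MeasurableSpace X]
    (μ : Measure X) (D : ℝ) (U : Set X) : Prop :=
  ∀ x ∈ measSupp μ, ∀ r : ℝ, 0 < r → ball x (3 * r) ⊆ U →
    μ (ball x (3 * r)) ≤ ENNReal.ofReal D * μ (ball x r)

/-- `μ` is Federer. -/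
def IsFederer {X : Type*} [MetricSpace X] [MeasurableSpace X] (μ : Measure X) : Prop :=
  ∀ᵐ x ∂μ, ∃ U : Set X, IsOpen U ∧ x ∈ U ∧ 0 < μ U ∧ ∃ D : ℝ, 0 < D ∧ IsDFedererOn μ D U

/-- The pair `(f, μ)` is good: `μ`-a.e. point has a neighbourhood `V` and `C, α > 0`
such that every affine combination `c₀ + Σ cᵢ fᵢ` is `(C, α)`-good on `V` w.r.t. `μ`. -/
def GoodPair {X : Type*} [MetricSpace X] [MeasurableSpace X] {n : ℕ}
    (f : X → (Fin n → ℚ_[p])) (μ : Measure X) : Prop :=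
  ∀ᵐ x ∂μ, ∃ V : Set X, IsOpen V ∧ x ∈ V ∧ ∃ C a : ℝ, 0 < C ∧ 0 < a ∧
    ∀ c0 : ℚ_[p], ∀ c : Fin n → ℚ_[p],
      IsGoodOn p μ C a V (fun x => c0 + ∑ i, c i * f x i)

/-- `(f, μ)` is nonplanar in the affine subspace `L`. -/
def NonplanarIn {X : Type*} [MetricSpace X] [MeasurableSpace X] {n : ℕ}
    (f : X → (Fin n → ℚ_[p])) (μ : Measure X)
    (L : AffineSubspace ℚ_[p] (Fin n → ℚ_[p])) : Prop :=
  ∀ B : Set X, IsOpen B → B.Nonempty → 0 < μ B →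
    affineSpan ℚ_[p] (f '' (B ∩ measSupp μ)) = L

/-- `f` is nondegenerate in the affine subspace `L` at `x`: `f` takes values in `L` and the
span of the partial derivatives of `f` at `x` up to some order is the linear part of `L`. -/
def NondegenerateAt {d n : ℕ} (f : (Fin d → ℚ_[p]) → (Fin n → ℚ_[p]))
    (L : AffineSubspace ℚ_[p] (Fin n → ℚ_[p])) (x : Fin d → ℚ_[p]) : Prop :=
  (∀ u, f u ∈ L) ∧ ∃ m : ℕ,
    Submodule.span ℚ_[p]
      {v : Fin n → ℚ_[p] | ∃ j : ℕ, j ≤ m ∧ 1 ≤ j ∧ ∃ vs : Fin j → (Fin d → ℚ_[p]),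
        v = iteratedFDeriv ℚ_[p] j f x vs} = L.direction

/-- An analytic chart of the `d`-dimensional submanifold `M` of `ℚ_p^n`: an analytic map
`f` on an open set `U`, injective on `U`, immersive, a homeomorphism onto its image, whose
image is a relatively open subset of `M`. -/
def IsChart (d n : ℕ) (M : Set (Fin n → ℚ_[p]))
    (U : Set (Fin d → ℚ_[p])) (f : (Fin d → ℚ_[p]) → (Fin n → ℚ_[p])) : Prop :=
  IsOpen U ∧ AnalyticOnNhd ℚ_[p] f U ∧ Set.InjOn f U ∧
  (∀ x ∈ U, Function.Injective (fderiv ℚ_[p] f x)) ∧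
  (∀ x ∈ U, ∀ V : Set (Fin d → ℚ_[p]), IsOpen V → x ∈ V →
      ∃ W : Set (Fin n → ℚ_[p]), IsOpen W ∧ f x ∈ W ∧ W ∩ f '' U ⊆ f '' (V ∩ U)) ∧
  ∃ W : Set (Fin n → ℚ_[p]), IsOpen W ∧ M ∩ W = f '' U

/-- `M` is a `d`-dimensional analytic submanifold of `ℚ_p^n`. -/
def IsAnalyticSubmanifold (d n : ℕ) (M : Set (Fin n → ℚ_[p])) : Prop :=
  M.Nonempty ∧ ∀ y ∈ M, ∃ (U : Set (Fin d → ℚ_[p])) (f : (Fin d → ℚ_[p]) → (Fin n → ℚ_[p])),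
    IsChart p d n M U f ∧ y ∈ f '' U

/-!
An analytic map is given by convergent power series on the lines through a point, so by Fubini it
is enough to show: a power series `h : ℤ_p → ℚ_p^n` with `h z` not VWMA for a single `z` takes
almost no VWMA value. Choosing `p^{t_l}` slightly larger than `|q_l|` shows that `y` is VWMA iff for
some `γ > 0` there are infinitely many `t ∈ ℕ^{n+1}` for which the lattice attached to `y`, moved by
the diagonal flow with parameters `t`, has a nonzero vector of size at most `p^{-γ ∑ t_l}`.

If there is no such vector at `z` for the exponent `γ'`, then by Minkowski's theorem all rational
subspaces have covolume at least a fixed power of `p^{-γ' ∑ t_l}` at `z`. As functions of `x` these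
covolumes are built from linear combinations of the coordinates of `h`, and are good with uniform
constants, since a power series is controlled by its divided differences at the last index where
the coefficients are maximal. The Kleinbock–Margulis induction over chains of subspaces then bounds
the measure of the set of `x` having a short vector with exponent `γ > γ'` by a negative power of
`p^{∑ t_l}`. This is summable in `t`, and Borel–Cantelli applies.
-/

open Filter Topology Polynomial

/-! ### Divided differences over ultrametric fields -/

section DividedDifference

theorem norm_eval_nodal_le {K : Type*} [NormedField K] {s : Finset K} {z : K} {r : ℝ}
    (hz : ∀ x ∈ s, ‖z - x‖ ≤ r) :
    ‖(Lagrange.nodal s id).eval z‖ ≤ r ^ s.card := by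
  rw [Lagrange.eval_nodal, norm_prod, ← Finset.prod_const]
  exact Finset.prod_le_prod (fun _ _ => norm_nonneg _) hz

variable {K : Type*} [DecidableEq K]

/-- The divided difference of `g` at the (distinct) nodes `s`, in the symmetric form given by the
barycentric weights; its order is `s.card - 1`. -/
noncomputable def dividedDiff [Field K] (s : Finset K) (g : K → K) : K :=
  ∑ x ∈ s, Lagrange.nodalWeight s id x * g x

section Field

variable [Field K] {s : Finset K}

theorem dividedDiff_congr {g h : K → K} (hgh : ∀ x ∈ s, g x = h x) :
    dividedDiff s g = dividedDiff s h :=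
  Finset.sum_congr rfl fun x hx => by rw [hgh x hx]

theorem dividedDiff_eval {P : K[X]} (hP : P.degree < s.card) :
    dividedDiff s P.eval = P.coeff (s.card - 1) := by
  rw [Lagrange.coeff_eq_sum (Set.injOn_id _) hP]
  refine Finset.sum_congr rfl fun x _ => ?_
  rw [Lagrange.nodalWeight, Finset.prod_inv_distrib, mul_comm, div_eq_mul_inv, id]

theorem dividedDiff_pow_of_lt {n : ℕ} (hn : n < s.card) :
    dividedDiff s (· ^ n) = if n = s.card - 1 then 1 else 0 := by
  have hdeg : (X ^ n : K[X]).degree < s.card := by rw [degree_X_pow]; exact_mod_cast hn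
  simpa only [eval_pow, eval_X, coeff_X_pow, eq_comm] using dividedDiff_eval hdeg

theorem dividedDiff_pow_mem {A : Subring K} (hs : ∀ x ∈ s, x ∈ A) (n : ℕ) :
    dividedDiff s (· ^ n) ∈ A := by
  let Q : A[X] := Lagrange.nodal s.attach fun x => ⟨x, hs x x.2⟩
  have hQ : Q.Monic := Lagrange.nodal_monic
  let R : A[X] := X ^ n %ₘ Q
  have hdeg : (R.map A.subtype).degree < s.card := by
    refine degree_map_le.trans_lt ((degree_modByMonic_lt _ hQ).trans_eq ?_)
    rw [Lagrange.degree_nodal, Finset.card_attach]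
  have heval : ∀ x ∈ s, x ^ n = (R.map A.subtype).eval x := by
    intro x hx
    have hroot : Q.eval ⟨x, hs x hx⟩ = 0 :=
      Lagrange.eval_nodal_at_node (v := fun y : s => (⟨y, hs y y.2⟩ : A))
        (Finset.mem_attach s ⟨x, hx⟩)
    have hR : R.eval ⟨x, hs x hx⟩ = (⟨x, hs x hx⟩ : A) ^ n := by
      simpa [R, hroot] using congrArg (eval ⟨x, hs x hx⟩) (modByMonic_add_div (X ^ n) Q)
    exact (congrArg A.subtype hR).symm.trans (eval_map_apply A.subtype _).symm
  rw [dividedDiff_congr heval, dividedDiff_eval hdeg, coeff_map]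
  exact (R.coeff _).2

theorem eval_interpolate_add_eval_nodal_mul_dividedDiff {z : K} (hz : z ∉ s) (g : K → K) :
    (Lagrange.interpolate s id g).eval z +
      (Lagrange.nodal s id).eval z * dividedDiff (insert z s) g = g z := by
  have hne : ∀ x ∈ s, z ≠ id x := fun x hx h => hz (h ▸ hx)
  have hnodal : (Lagrange.nodal s id).eval z ≠ 0 := Lagrange.eval_nodal_not_at_node hne
  have hweight : ∀ x ∈ s, Lagrange.nodalWeight (insert z s) id x =
      -(Lagrange.nodalWeight s id x * (z - x)⁻¹) := by
    intro x hx
    have hzx : z ≠ x := hne x hx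
    rw [Lagrange.nodalWeight, Finset.erase_insert_of_ne hzx,
      Finset.prod_insert fun h => hz (Finset.mem_of_mem_erase h), Lagrange.nodalWeight, id, id,
      ← neg_sub z x, inv_neg, neg_mul, mul_comm]
  have hsum : ∑ x ∈ s, Lagrange.nodalWeight (insert z s) id x * g x =
      -∑ x ∈ s, Lagrange.nodalWeight s id x * (z - id x)⁻¹ * g x := by
    rw [← Finset.sum_neg_distrib]
    exact Finset.sum_congr rfl fun x hx => by rw [hweight x hx, neg_mul, id]
  rw [Lagrange.eval_interpolate_not_at_node g hne, ← mul_add, dividedDiff,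
    Finset.sum_insert hz, hsum, Lagrange.nodalWeight_eq_eval_nodal_erase_inv,
    Finset.erase_insert hz, id, add_comm, neg_add_cancel_right, mul_inv_cancel_left₀ hnodal]

end Field

section Ultrametric

variable [NormedField K] [IsUltrametricDist K] {s : Finset K}

theorem norm_dividedDiff_pow_le_one (hs : ∀ x ∈ s, ‖x‖ ≤ 1) (n : ℕ) :
    ‖dividedDiff s (· ^ n)‖ ≤ 1 :=
  dividedDiff_pow_mem (A := (NormedField.valuation (K := K)).integer) hs n

/-- Only the term of degree `N` survives: lower powers have vanishing divided difference, and higher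
ones are strictly dominated. -/
theorem norm_dividedDiff_eq_norm_coeff {N : ℕ} (hcard : s.card = N + 1) (hs : ∀ x ∈ s, ‖x‖ ≤ 1)
    {c : ℕ → K} {g : K → K} (hg : ∀ x ∈ s, HasSum (fun n => c n * x ^ n) (g x))
    (hc : ∀ n, N < n → ‖c n‖ < ‖c N‖) : ‖dividedDiff s g‖ = ‖c N‖ := by
  have hsum : HasSum (fun n => c n * dividedDiff s (· ^ n)) (dividedDiff s g) := by
    simp only [dividedDiff, Finset.mul_sum, mul_left_comm (c _)]
    exact hasSum_sum fun x hx => (hg x hx).mul_left _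
  have hpartial : ∀ M, N + 1 ≤ M →
      ‖∑ n ∈ Finset.range M, c n * dividedDiff s (· ^ n)‖ = ‖c N‖ := by
    intro M hM
    induction M, hM using Nat.le_induction with
    | base =>
      rw [Finset.sum_range_succ, Finset.sum_eq_zero, dividedDiff_pow_of_lt (by omega),
        if_pos (by omega), zero_add, mul_one]
      intro n hn
      have hn' := Finset.mem_range.mp hn
      rw [dividedDiff_pow_of_lt (by omega), if_neg (by omega), mul_zero]
    | succ M hM ih =>
      have hlt : ‖c M * dividedDiff s (· ^ M)‖ <
          ‖∑ n ∈ Finset.range M, c n * dividedDiff s (· ^ n)‖ := by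
        rw [ih, norm_mul]
        exact (mul_le_of_le_one_right (norm_nonneg _)
          (norm_dividedDiff_pow_le_one hs M)).trans_lt (hc M hM)
      rw [Finset.sum_range_succ, IsUltrametricDist.norm_add_eq_max_of_norm_ne_norm hlt.ne',
        max_eq_left hlt.le, ih]
  refine tendsto_nhds_unique hsum.tendsto_sum_nat.norm (tendsto_const_nhds.congr' ?_)
  filter_upwards [eventually_ge_atTop (N + 1)] with M hM using (hpartial M hM).symm

variable {g : K → K} {σ r ε : ℝ}

theorem norm_dividedDiff_mul_pow_le (hσ : 0 < σ)
    (hsep : ∀ x ∈ s, ∀ y ∈ s, x ≠ y → σ ≤ ‖x - y‖) (hε : 0 ≤ ε) (hg : ∀ x ∈ s, ‖g x‖ ≤ ε) :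
    ‖dividedDiff s g‖ * σ ^ (s.card - 1) ≤ ε := by
  rw [← le_div_iff₀ (by positivity)]
  refine IsUltrametricDist.norm_sum_le_of_forall_le_of_nonneg (by positivity) fun x hx => ?_
  rw [Lagrange.nodalWeight, Finset.prod_inv_distrib, norm_mul, norm_inv, norm_prod, mul_comm,
    ← div_eq_mul_inv]
  refine div_le_div₀ hε (hg x hx) (by positivity) ?_
  rw [← Finset.card_erase_of_mem hx]
  rw [← Finset.prod_const]
  exact Finset.prod_le_prod (fun _ _ => hσ.le) fun y hy =>
    hsep x hx y (Finset.mem_of_mem_erase hy) (Finset.ne_of_mem_erase hy).symm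

theorem norm_eval_interpolate_le {z : K} (hσ : 0 < σ) (hσr : σ ≤ r) (hε : 0 ≤ ε)
    (hsep : ∀ x ∈ s, ∀ y ∈ s, x ≠ y → σ ≤ ‖x - y‖) (hz : ∀ x ∈ s, ‖z - x‖ ≤ r)
    (hg : ∀ x ∈ s, ‖g x‖ ≤ ε) :
    ‖(Lagrange.interpolate s id g).eval z‖ ≤ ε * (r / σ) ^ s.card := by
  have hr : 0 < r := hσ.trans_le hσr
  rw [Lagrange.interpolate_apply, eval_finsetSum]
  refine IsUltrametricDist.norm_sum_le_of_forall_le_of_nonneg (by positivity) fun x hx => ?_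
  rw [eval_mul, eval_C, norm_mul, Lagrange.basis, eval_prod, norm_prod]
  refine mul_le_mul (hg x hx) ?_ (by positivity) hε
  calc _ ≤ (r / σ) ^ (s.erase x).card := by
        rw [← Finset.prod_const]
        refine Finset.prod_le_prod (fun _ _ => norm_nonneg _) fun y hy => ?_
        have hys := Finset.mem_of_mem_erase hy
        rw [Lagrange.basisDivisor, eval_mul, eval_C, eval_sub, eval_X, eval_C, id, id, mul_comm,
          ← div_eq_mul_inv, norm_div]
        exact div_le_div₀ hr.le (hz y hys) hσ (hsep x hx y hys (Finset.ne_of_mem_erase hy).symm)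
    _ ≤ _ := pow_le_pow_right₀ ((one_le_div hσ).mpr hσr) (Finset.card_erase_le)

omit [DecidableEq K] in
/-- Newton's interpolation formula at `z`, with one node dropped so that the remainder is the same
divided difference, of order `N`, that the nodes themselves control. -/
theorem norm_mul_pow_le_of_separated {N : ℕ} {c : ℕ → K} {z : K}
    (hg : ∀ x, ‖x‖ ≤ 1 → HasSum (fun n => c n * x ^ n) (g x))
    (hc : ∀ n, N < n → ‖c n‖ < ‖c N‖) (hcard : s.card = N + 1) (hs : ∀ x ∈ s, ‖x‖ ≤ 1)
    (hz1 : ‖z‖ ≤ 1) (hzs : z ∉ s) (hσ : 0 < σ) (hσr : σ ≤ r)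
    (hsep : ∀ x ∈ s, ∀ y ∈ s, x ≠ y → σ ≤ ‖x - y‖) (hz : ∀ x ∈ s, ‖z - x‖ ≤ r)
    (hε : 0 ≤ ε) (hgs : ∀ x ∈ s, ‖g x‖ ≤ ε) :
    ‖g z‖ * σ ^ N ≤ ε * r ^ N := by
  classical
  have hr : 0 < r := hσ.trans_le hσr
  have hcN : ‖c N‖ * σ ^ N ≤ ε := by
    rw [← norm_dividedDiff_eq_norm_coeff hcard hs (fun x hx => hg x (hs x hx)) hc]
    simpa only [hcard, Nat.add_sub_cancel] using norm_dividedDiff_mul_pow_le hσ hsep hε hgs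
  obtain ⟨x₀, hx₀⟩ : s.Nonempty := Finset.card_pos.mp (by omega)
  set t := s.erase x₀ with ht
  have hts : ∀ x ∈ t, x ∈ s := fun x hx => Finset.mem_of_mem_erase hx
  have htcard : t.card = N := by rw [ht, Finset.card_erase_of_mem hx₀, hcard, Nat.add_sub_cancel]
  have hzt : z ∉ t := fun h => hzs (hts z h)
  have hins : ∀ x ∈ insert z t, ‖x‖ ≤ 1 :=
    Finset.forall_mem_insert _ _ _ |>.mpr ⟨hz1, fun x hx => hs x (hts x hx)⟩
  have hinterp : ‖(Lagrange.interpolate t id g).eval z‖ ≤ ε * (r / σ) ^ N := by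
    rw [← htcard]
    exact norm_eval_interpolate_le hσ hσr hε (fun x hx y hy => hsep x (hts x hx) y (hts y hy))
      (fun x hx => hz x (hts x hx)) (fun x hx => hgs x (hts x hx))
  have hremainder :
      ‖(Lagrange.nodal t id).eval z * dividedDiff (insert z t) g‖ ≤ ε * (r / σ) ^ N := by
    rw [norm_mul, norm_dividedDiff_eq_norm_coeff
      (by rw [Finset.card_insert_of_notMem hzt, htcard]) hins (fun x hx => hg x (hins x hx)) hc]
    calc _ ≤ r ^ N * (ε / σ ^ N) :=
          mul_le_mul (htcard ▸ norm_eval_nodal_le fun x hx => hz x (hts x hx))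
            ((le_div_iff₀ (by positivity)).mpr hcN) (norm_nonneg _) (by positivity)
      _ = ε * (r / σ) ^ N := by rw [div_pow]; ring
  rw [← le_div_iff₀ (by positivity), mul_div_assoc, ← div_pow,
    ← eval_interpolate_add_eval_nodal_mul_dividedDiff hzt g]
  exact (IsUltrametricDist.norm_add_le_max _ _).trans (max_le hinterp hremainder)

end Ultrametric

end DividedDifference

/-! ### Goodness of power series on `ℚ_p` -/

theorem exists_separated_finset_of_lt_measure {X : Type*} [PseudoMetricSpace X] [MeasurableSpace X]
    {μ : Measure X} {σ : ℝ} {m : ℝ≥0∞} (hσ : 0 ≤ σ)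
    (hμ : ∀ z, μ (closedBall z σ) ≤ m) {E : Set X} {k : ℕ}
    (h : k * m < μ E) :
    ∃ t : Finset X, ↑t ⊆ E ∧ t.card = k + 1 ∧ (t : Set X).Pairwise fun x y => σ < dist x y := by
  classical
  induction k with
  | zero =>
    obtain ⟨x, hx⟩ : E.Nonempty := nonempty_of_measure_ne_zero (zero_le.trans_lt h).ne'
    exact ⟨{x}, by simpa using hx, rfl, by simp⟩
  | succ k ih =>
    obtain ⟨t, htE, htcard, htsep⟩ := ih (lt_of_le_of_lt (by gcongr; omega) h)
    obtain ⟨z, hzE, hz⟩ : ∃ z ∈ E, ∀ x ∈ t, σ < dist z x := by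
      by_contra! hcover
      refine h.not_ge ?_
      calc μ E ≤ μ (⋃ x ∈ t, closedBall x σ) := measure_mono fun z hz => by
            simpa only [Set.mem_iUnion₂, mem_closedBall, exists_prop] using hcover z hz
        _ ≤ ∑ x ∈ t, μ (closedBall x σ) := measure_biUnion_finset_le _ _
        _ ≤ ∑ _x ∈ t, m := Finset.sum_le_sum fun x _ => hμ x
        _ = (k + 1 : ℕ) * m := by rw [Finset.sum_const, htcard, nsmul_eq_mul]
    have hzt : z ∉ t := fun hzt => (hz z hzt).not_ge (dist_self z ▸ hσ)
    refine ⟨insert z t, ?_, by rw [Finset.card_insert_of_notMem hzt, htcard], ?_⟩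
    · rw [Finset.coe_insert]
      exact Set.insert_subset hzE htE
    · rw [Finset.coe_insert]
      exact htsep.insert fun x hx _ => ⟨hz x hx, dist_comm z x ▸ hz x hx⟩

section DominantIndex

theorem exists_last_dominant {α : Type*} [LinearOrder α] {u : ℕ → α} {M n₀ : ℕ} (hn₀ : n₀ < M)
    (hu : ∀ n, M ≤ n → u n < u n₀) : ∃ N < M, ∀ n, N < n → u n < u N := by
  obtain ⟨N, hN, hmax⟩ := (Finset.range M).exists_max_image (fun n => toLex (u n, n))
    ⟨n₀, Finset.mem_range.mpr hn₀⟩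
  refine ⟨N, Finset.mem_range.mp hN, fun n hn => ?_⟩
  by_contra! hle
  rcases lt_or_ge n M with hnM | hMn
  · have := Prod.Lex.toLex_le_toLex.mp (hmax n (Finset.mem_range.mpr hnM))
    grind
  · have := Prod.Lex.toLex_le_toLex.mp (hmax n₀ (Finset.mem_range.mpr hn₀))
    grind

theorem exists_forall_eq_zero_of_forall_lt {R E F : Type*} [Ring R] [AddCommGroup E] [Module R E]
    [IsArtinian R E] [AddCommGroup F] [Module R F] (φ : ℕ → E →ₗ[R] F) :
    ∃ M, ∀ v, (∀ n < M, φ n v = 0) → ∀ n, φ n v = 0 := by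
  let K : ℕ →o (Submodule R E)ᵒᵈ :=
    ⟨fun M => OrderDual.toDual (⨅ n : Fin M, LinearMap.ker (φ n)), fun a b hab =>
      OrderDual.toDual_le_toDual.mpr <| le_iInf fun n =>
        iInf_le (fun n : Fin b => LinearMap.ker (φ n)) (n.castLE hab)⟩
  have hK : ∀ {M v}, v ∈ OrderDual.ofDual (K M) ↔ ∀ n < M, φ n v = 0 := fun {M v} => by
    simp [K, Submodule.mem_iInf, Fin.forall_iff]
  obtain ⟨M, hM⟩ := IsArtinian.monotone_stabilizes K
  refine ⟨M, fun v hv n => ?_⟩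
  have hmem : v ∈ OrderDual.ofDual (K (max M (n + 1))) := hM _ (le_max_left _ _) ▸ hK.mpr hv
  exact hK.mp hmem n (lt_max_of_lt_right n.lt_succ_self)

variable {K E F : Type*} [NontriviallyNormedField K] [CompleteSpace K]
  [NormedAddCommGroup E] [NormedSpace K E] [FiniteDimensional K E]
  [NormedAddCommGroup F] [NormedSpace K F]

theorem exists_norm_apply_le_mul_norm (φ : ℕ → E →L[K] F) :
    ∃ (M : ℕ) (C : ℝ≥0), ∀ n v, ‖φ n v‖ ≤ ‖φ n‖ * (C * ‖fun i : Fin M => φ i v‖) := by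
  obtain ⟨M, hM⟩ := exists_forall_eq_zero_of_forall_lt fun n => (φ n : E →ₗ[K] F)
  let L : E →ₗ[K] Fin M → F := LinearMap.pi fun i => (φ i : E →ₗ[K] F)
  obtain ⟨R, hR⟩ :=
    LinearMap.exists_rightInverse_of_surjective L.rangeRestrict L.range_rangeRestrict
  refine ⟨M, ‖LinearMap.toContinuousLinearMap R‖₊, fun n v => ?_⟩
  set w := R (L.rangeRestrict v)
  have hw : L w = L v := congrArg Subtype.val (LinearMap.congr_fun hR (L.rangeRestrict v))
  have hker : φ n (v - w) = 0 := hM _ (fun i hi => by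
    have hi' : φ i w = φ i v := congrFun hw ⟨i, hi⟩
    rw [ContinuousLinearMap.coe_coe, map_sub, hi', sub_self]) n
  rw [map_sub, sub_eq_zero] at hker
  rw [hker]
  exact (φ n).le_opNorm_of_le ((LinearMap.toContinuousLinearMap R).le_opNorm _)

/-- A null sequence of functionals on a finite-dimensional space, evaluated at a vector, attains its
maximal norm for the last time before an index independent of the vector. -/
theorem exists_uniform_dominant_index {φ : ℕ → E →L[K] F} (hφ : Tendsto φ atTop (𝓝 0)) :
    ∃ D, ∀ v, (∀ n, φ n v = 0) ∨ ∃ N ≤ D, ∀ n, N < n → ‖φ n v‖ < ‖φ N v‖ := by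
  obtain ⟨M, C, hC⟩ := exists_norm_apply_le_mul_norm φ
  obtain ⟨M', hM'⟩ := eventually_atTop.mp <|
    hφ.norm.eventually_lt_const (u := ((C : ℝ) + 1)⁻¹) (by rw [norm_zero]; positivity)
  refine ⟨max M M', fun v => or_iff_not_imp_left.mpr fun hv => ?_⟩
  have hpos : 0 < ‖fun i : Fin M => φ i v‖ := by
    refine norm_pos_iff.mpr fun h0 => hv fun n => norm_le_zero_iff.mp ?_
    simpa only [h0, norm_zero, mul_zero] using hC n v
  have : Nonempty (Fin M) := not_isEmpty_iff.mp fun _ =>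
    hpos.ne' (by rw [Subsingleton.elim (fun i : Fin M => φ i v) 0, norm_zero])
  obtain ⟨n₀, hn₀⟩ := Finite.exists_max fun i : Fin M => ‖φ i v‖
  have htail : ∀ n, max M M' ≤ n → ‖φ n v‖ < ‖φ n₀ v‖ := by
    intro n hn
    calc ‖φ n v‖ ≤ ‖φ n‖ * (C * ‖fun i : Fin M => φ i v‖) := hC n v
      _ ≤ (C + 1 : ℝ)⁻¹ * (C * ‖fun i : Fin M => φ i v‖) := by
          gcongr
          exact (hM' n (le_of_max_le_right hn)).le
      _ < (C + 1 : ℝ)⁻¹ * ((C + 1) * ‖fun i : Fin M => φ i v‖) := by gcongr; linarith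
      _ = ‖fun i : Fin M => φ i v‖ := inv_mul_cancel_left₀ (by positivity) _
      _ ≤ ‖φ n₀ v‖ := (pi_norm_le_iff_of_nonneg (norm_nonneg _)).mpr hn₀
  obtain ⟨N, hN, hdom⟩ := exists_last_dominant (lt_max_of_lt_left n₀.2) htail
  exact ⟨N, hN.le, hdom⟩

end DominantIndex

/-- The radii `p⁻ᵏ` of the balls of `ℤ_p`, which index the levels of the tree of balls. -/
noncomputable def radius (k : ℕ) : ℝ := (p : ℝ)⁻¹ ^ k

/-- The Haar measure on `ℚ_p`, normalized so that `ℤ_p` has measure one. -/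
noncomputable def padicHaar : Measure ℚ_[p] :=
  Measure.addHaarMeasure ⟨⟨closedBall 0 1, isCompact_closedBall _ _⟩,
    ⟨0, mem_interior_iff_mem_nhds.mpr (closedBall_mem_nhds _ one_pos)⟩⟩

section Radius

theorem prime_pos : (0 : ℝ) < p := by exact_mod_cast (Fact.out : p.Prime).pos

theorem one_lt_prime : (1 : ℝ) < p := by exact_mod_cast (Fact.out : p.Prime).one_lt

omit [Fact p.Prime] in
theorem radius_eq_zpow (k : ℕ) : radius p k = (p : ℝ) ^ (-(k : ℤ)) := by
  rw [radius, zpow_neg, zpow_natCast, inv_pow]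

theorem radius_pos (k : ℕ) : 0 < radius p k := pow_pos (inv_pos.mpr (prime_pos p)) k

theorem radius_anti : Antitone (radius p) :=
  pow_right_anti₀ (inv_nonneg.mpr (prime_pos p).le) (inv_le_one_of_one_le₀ (one_lt_prime p).le)

omit [Fact p.Prime] in
theorem radius_zero : radius p 0 = 1 := pow_zero _

theorem radius_le_one (k : ℕ) : radius p k ≤ 1 :=
  (radius_anti p k.zero_le).trans_eq (radius_zero p)

theorem radius_eq_mul_radius_succ (k : ℕ) : radius p k = p * radius p (k + 1) := by
  rw [radius, radius, pow_succ', mul_inv_cancel_left₀ (prime_pos p).ne']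

theorem exists_radius_lt {δ : ℝ} (hδ : 0 < δ) : ∃ k, radius p k < δ :=
  exists_pow_lt_of_lt_one hδ (inv_lt_one_of_one_lt₀ (one_lt_prime p))

end Radius

section Haar

instance : (padicHaar p).IsAddHaarMeasure := by unfold padicHaar; infer_instance

theorem padicHaar_closedBall_one : padicHaar p (closedBall 0 1) = 1 :=
  Measure.addHaarMeasure_self

variable {p}

theorem closedBall_zero_one_eq_biUnion (k : ℕ) :
    closedBall (0 : ℚ_[p]) 1 = ⋃ i ∈ Finset.range (p ^ k), closedBall (i : ℚ_[p]) (radius p k) := by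
  ext x
  simp only [Set.mem_iUnion₂, exists_prop]
  constructor
  · intro hx
    let X : ℤ_[p] := ⟨x, mem_closedBall_zero_iff.mp hx⟩
    refine ⟨X.appr k, Finset.mem_range.mpr (X.appr_lt k), ?_⟩
    have happr := X.appr_spec k
    rw [← PadicInt.norm_le_pow_iff_mem_span_pow, ← radius_eq_zpow] at happr
    simpa only [mem_closedBall, dist_eq_norm, PadicInt.norm_def, PadicInt.coe_sub,
      PadicInt.coe_natCast] using happr
  · rintro ⟨i, -, hx⟩
    have hi : (i : ℚ_[p]) ∈ closedBall (0 : ℚ_[p]) 1 :=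
      mem_closedBall_zero_iff.mpr (IsUltrametricDist.norm_natCast_le_one _ i)
    rw [IsUltrametricDist.closedBall_eq_of_mem hi]
    exact closedBall_subset_closedBall (radius_le_one p k) hx

theorem pairwiseDisjoint_closedBall_radius (k : ℕ) :
    (Finset.range (p ^ k) : Set ℕ).PairwiseDisjoint
      fun i : ℕ => closedBall (i : ℚ_[p]) (radius p k) := by
  intro i hi j hj hij
  rw [Function.onFun, Set.disjoint_left]
  intro x hxi hxj
  have hdist : ‖((i - j : ℤ) : ℚ_[p])‖ ≤ (p : ℝ) ^ (-(k : ℤ)) := by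
    rw [← radius_eq_zpow]
    push_cast
    rw [← dist_eq_norm]
    exact (dist_triangle_max _ x _).trans (max_le (mem_closedBall'.mp hxi) (mem_closedBall.mp hxj))
  rw [Padic.norm_int_le_pow_iff_dvd] at hdist
  simp only [Finset.coe_range, Set.mem_Iio] at hi hj
  have hi' : (i : ℤ) < (p : ℤ) ^ k := by exact_mod_cast hi
  have hj' : (j : ℤ) < (p : ℤ) ^ k := by exact_mod_cast hj
  have hzero := Int.eq_zero_of_abs_lt_dvd hdist (by rw [abs_lt]; constructor <;> omega)
  omega

theorem padicHaar_closedBall_eq (z : ℚ_[p]) (r : ℝ) :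
    padicHaar p (closedBall z r) = padicHaar p (closedBall 0 r) := by
  rw [← measure_preimage_add (padicHaar p) z (closedBall z r), preimage_add_closedBall, sub_self]

theorem padicHaar_closedBall (z : ℚ_[p]) (k : ℕ) :
    padicHaar p (closedBall z (radius p k)) = ENNReal.ofReal (radius p k) := by
  have hsum : (p ^ k : ℕ) * padicHaar p (closedBall 0 (radius p k)) = 1 := by
    rw [← padicHaar_closedBall_one p, closedBall_zero_one_eq_biUnion k,
      measure_biUnion_finset (pairwiseDisjoint_closedBall_radius k)
        fun _ _ => measurableSet_closedBall]
    simp only [padicHaar_closedBall_eq (p := p) (Nat.cast _), Finset.sum_const, Finset.card_range,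
      nsmul_eq_mul]
  rw [mul_comm] at hsum
  rw [padicHaar_closedBall_eq, ENNReal.eq_inv_of_mul_eq_one_left hsum, radius, inv_pow,
    ENNReal.ofReal_inv_of_pos (pow_pos (prime_pos p) k), ← Nat.cast_pow, ENNReal.ofReal_natCast]

theorem padicHaar_closedBall_le (z : ℚ_[p]) {r : ℝ} (h0 : 0 < r) (h1 : r ≤ 1) :
    padicHaar p (closedBall z r) ≤ ENNReal.ofReal r := by
  obtain ⟨n, hn, hn'⟩ := exists_nat_pow_near_of_lt_one h0 h1 (inv_pos.mpr (prime_pos p))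
    (inv_lt_one_of_one_lt₀ (one_lt_prime p))
  rcases hn'.eq_or_lt with rfl | hlt
  · exact (padicHaar_closedBall z n).le
  · have hsub : closedBall z r ⊆ closedBall z (radius p (n + 1)) := fun x hx => by
      rw [mem_closedBall, dist_eq_norm, radius_eq_zpow, Padic.norm_le_pow_iff_norm_lt_pow_add_one]
      refine (mem_closedBall_iff_norm.mp hx).trans_lt (hlt.trans_eq ?_)
      rw [← radius, radius_eq_zpow]
      congr 1
      push_cast
      ring
    calc _ ≤ padicHaar p (closedBall z (radius p (n + 1))) := measure_mono hsub
      _ = ENNReal.ofReal (radius p (n + 1)) := padicHaar_closedBall z (n + 1)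
      _ ≤ ENNReal.ofReal r := ENNReal.ofReal_le_ofReal hn.le

end Haar

section Goodness

variable {p} {N : ℕ} {c : ℕ → ℚ_[p]} {g : ℚ_[p] → ℚ_[p]} {z : ℚ_[p]} {ε ρ : ℝ}

theorem mul_pow_le_of_lt_padicHaar
    (hg : ∀ x, ‖x‖ ≤ 1 → HasSum (fun n => c n * x ^ n) (g x))
    (hc : ∀ n, N < n → ‖c n‖ < ‖c N‖) (hz : ‖z‖ ≤ 1) (k : ℕ) (hε : 0 < ε) (hεz : ε ≤ ‖g z‖)
    {σ : ℝ} (hσ : 0 < σ) (hσr : σ ≤ radius p k)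
    (hlt : ENNReal.ofReal (N * σ) < padicHaar p {x ∈ closedBall z (radius p k) | ‖g x‖ < ε}) :
    ‖g z‖ * σ ^ N ≤ ε * radius p k ^ N := by
  classical
  obtain ⟨s, hsE, hcard, hsep⟩ := exists_separated_finset_of_lt_measure hσ.le
    (fun x => padicHaar_closedBall_le x hσ (hσr.trans (radius_le_one p k)))
    (by rwa [← ENNReal.ofReal_natCast, ← ENNReal.ofReal_mul N.cast_nonneg])
  have hball : closedBall z (radius p k) ⊆ closedBall 0 1 := by
    rw [IsUltrametricDist.closedBall_eq_of_mem (mem_closedBall_zero_iff.mpr hz)]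
    exact closedBall_subset_closedBall (radius_le_one p k)
  refine norm_mul_pow_le_of_separated hg hc hcard
    (fun x hx => mem_closedBall_zero_iff.mp (hball (hsE hx).1)) hz
    (fun hzs => (hsE hzs).2.not_ge hεz) hσ hσr (fun x hx y hy hxy => ?_) (fun x hx => ?_) hε.le
    fun x hx => (hsE hx).2.le
  · exact (hsep hx hy hxy).le.trans_eq (dist_eq_norm x y)
  · exact mem_closedBall_iff_norm'.mp (hsE hx).1

theorem le_rpow_inv_of_pow_le {x q : ℝ} {D : ℕ} (hx0 : 0 ≤ x) (hx1 : x ≤ 1) (hND : N ≤ D)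
    (hD : D ≠ 0) (h : x ^ N ≤ q) : x ≤ q ^ (D : ℝ)⁻¹ :=
  calc x = (x ^ D) ^ (D : ℝ)⁻¹ := (Real.pow_rpow_inv_natCast hx0 hD).symm
    _ ≤ q ^ (D : ℝ)⁻¹ := by
        gcongr
        exact (pow_le_pow_of_le_one hx0 hx1 hND).trans h

/-- A power series dominated by its coefficient of index at most `D` is `(D + 1, 1 / D)`-good. -/
theorem padicHaar_norm_lt_le {D : ℕ} (hD : D ≠ 0) (hND : N ≤ D)
    (hg : ∀ x, ‖x‖ ≤ 1 → HasSum (fun n => c n * x ^ n) (g x))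
    (hc : ∀ n, N < n → ‖c n‖ < ‖c N‖) (hz : ‖z‖ ≤ 1) (k : ℕ) (hε : 0 < ε) (hερ : ε ≤ ρ)
    (hρz : ρ ≤ ‖g z‖) :
    padicHaar p {x ∈ closedBall z (radius p k) | ‖g x‖ < ε} ≤
      ENNReal.ofReal ((D + 1) * (ε / ρ) ^ (D : ℝ)⁻¹ * radius p k) := by
  set E := {x ∈ closedBall z (radius p k) | ‖g x‖ < ε}
  have hr := radius_pos p k
  have hρ : 0 < ρ := hε.trans_le hερ
  have hE : padicHaar p E ≤ ENNReal.ofReal (radius p k) :=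
    (measure_mono (Set.sep_subset _ _)).trans_eq (padicHaar_closedBall z k)
  obtain ⟨m, hm⟩ : ∃ m : ℝ≥0, padicHaar p E = m :=
    ⟨_, (ENNReal.coe_toNNReal (ne_top_of_le_ne_top ENNReal.ofReal_ne_top hE)).symm⟩
  rw [hm, ENNReal.le_ofReal_iff_toReal_le ENNReal.coe_ne_top (by positivity), ENNReal.coe_toReal]
  rw [hm, ENNReal.le_ofReal_iff_toReal_le ENNReal.coe_ne_top hr.le, ENNReal.coe_toReal] at hE
  rcases eq_or_ne m 0 with rfl | hm0
  · rw [NNReal.coe_zero]; positivity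
  have hmpos : (0 : ℝ) < m := NNReal.coe_pos.mpr (pos_iff_ne_zero.mpr hm0)
  set σ : ℝ := m / (D + 1)
  have hσ : 0 < σ := by positivity
  have hσr : σ ≤ radius p k :=
    (div_le_self hmpos.le (le_add_of_nonneg_left D.cast_nonneg)).trans hE
  have hNσ : ENNReal.ofReal (N * σ) < padicHaar p E := by
    rw [hm, ENNReal.ofReal_lt_coe_iff (by positivity), ← mul_div_assoc, div_lt_iff₀ (by positivity),
      mul_comm]
    have : (N : ℝ) ≤ D := by exact_mod_cast hND
    gcongr
    linarith
  have hpow : (σ / radius p k) ^ N ≤ ε / ρ := by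
    rw [div_pow, div_le_div_iff₀ (by positivity) hρ, mul_comm]
    exact (mul_le_mul_of_nonneg_right hρz (by positivity)).trans
      (mul_pow_le_of_lt_padicHaar hg hc hz k hε (hερ.trans hρz) hσ hσr hNσ)
  calc (m : ℝ) = (D + 1) * (σ / radius p k) * radius p k := by simp only [σ]; field_simp
    _ ≤ _ := by
      gcongr
      exact le_rpow_inv_of_pow_le (by positivity) ((div_le_one hr).mpr hσr) hND hD hpow

end Goodness

/-! ### Marked points -/

section Marking

variable {S X : Type*} [PartialOrder S]

/-- An element of a poset is compatible with a chain if it is new and extends it to a larger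
chain. -/
def IsCompatible (F : Finset S) (s : S) : Prop :=
  s ∉ F ∧ IsChain (· ≤ ·) (insert s (F : Set S))

/-- The marked points of Kleinbock and Margulis, relative to a chain `F` which is already fixed:
some chain `G ⊇ F` has `ε ≤ ψ s x < ρ` along `G \ F` and `ρ ≤ ψ s x` for all `s` compatible
with `G`. -/
def IsMarked (ψ : S → X → ℝ) (ε ρ : ℝ) (F : Finset S) (x : X) : Prop :=
  ∃ G : Finset S, F ⊆ G ∧ IsChain (· ≤ ·) (G : Set S) ∧
    (∀ s ∈ G, s ∉ F → ε ≤ ψ s x ∧ ψ s x < ρ) ∧ ∀ s, IsCompatible G s → ρ ≤ ψ s x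

variable {ψ : S → X → ℝ} {ε ρ : ℝ} {F : Finset S} {s t : S} {x : X}

theorem isMarked_of_forall_isCompatible (hF : IsChain (· ≤ ·) (F : Set S))
    (h : ∀ s, IsCompatible F s → ρ ≤ ψ s x) : IsMarked ψ ε ρ F x :=
  ⟨F, subset_rfl, hF, fun _ hs hs' => absurd hs hs', h⟩

section DecidableEq

variable [DecidableEq S]

theorem IsCompatible.isChain_insert (h : IsCompatible F s) :
    IsChain (· ≤ ·) ((insert s F : Finset S) : Set S) := by
  rw [Finset.coe_insert]
  exact h.2

theorem IsCompatible.of_insert (h : IsCompatible (insert s F) t) : IsCompatible F t :=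
  ⟨fun ht => h.1 (Finset.mem_insert_of_mem ht), h.2.mono <| Set.insert_subset_insert <|
    Finset.coe_subset.mpr (Finset.subset_insert _ _)⟩

theorem IsMarked.of_insert (h : IsMarked ψ ε ρ (insert s F) x) (hε : ε ≤ ψ s x)
    (hρ : ψ s x < ρ) : IsMarked ψ ε ρ F x := by
  obtain ⟨G, hFG, hG, hGF, hcompat⟩ := h
  refine ⟨G, (Finset.subset_insert _ _).trans hFG, hG, fun t htG htF => ?_, hcompat⟩
  by_cases hts : t = s
  · exact hts ▸ ⟨hε, hρ⟩
  · exact hGF t htG (by simp only [Finset.mem_insert, hts, htF, or_self, not_false_eq_true])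

theorem measure_not_isMarked_le_add [MeasurableSpace X] {μ : Measure X} {B B' : Set X}
    (hB : B ⊆ B') (hs : ∀ y ∈ B, ψ s y < ρ) :
    μ {y ∈ B | ¬ IsMarked ψ ε ρ F y} ≤
      μ {y ∈ B' | ψ s y < ε} + μ {y ∈ B' | ¬ IsMarked ψ ε ρ (insert s F) y} := by
  refine (measure_mono ?_).trans (measure_union_le _ _)
  rintro y ⟨hy, hyF⟩
  rcases lt_or_ge (ψ s y) ε with hlt | hge
  · exact Or.inl ⟨hB hy, hlt⟩
  · exact Or.inr ⟨hB hy, fun h => hyF (h.of_insert hge (hs y hy))⟩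

end DecidableEq

/-- The constants in `measure_not_isMarked_le`, when the measure of a ball of the tree is at most
`K` times that of its children. -/
noncomputable def markingConst (K : ℝ≥0∞) : ℕ → ℝ≥0∞
  | 0 => 0
  | m + 1 => K * (1 + markingConst K m)

theorem markingConst_ne_top {K : ℝ≥0∞} (hK : K ≠ ⊤) (m : ℕ) : markingConst K m ≠ ⊤ := by
  induction m with
  | zero => exact ENNReal.zero_ne_top
  | succ m ih => exact ENNReal.mul_ne_top hK (ENNReal.add_ne_top.mpr ⟨ENNReal.one_ne_top, ih⟩)

variable [PseudoMetricSpace X] {r : ℕ → ℝ} {k : ℕ}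

theorem exists_last_closedBall_forall_isCompatible (hr : Antitone r)
    (hF : IsChain (· ≤ ·) (F : Set S))
    (hcont : ∀ s, ψ s x < ρ → ∃ i, ∀ y ∈ closedBall x (r i), ψ s y < ρ)
    (hk : ∀ s, IsCompatible F s → ∃ y ∈ closedBall x (r k), ρ ≤ ψ s y)
    (hx : ¬ IsMarked ψ ε ρ F x) :
    ∃ j ≥ k, (∀ s, IsCompatible F s → ∃ y ∈ closedBall x (r j), ρ ≤ ψ s y) ∧
      ∃ s, IsCompatible F s ∧ ∀ y ∈ closedBall x (r (j + 1)), ψ s y < ρ := by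
  classical
  have hex : ∃ j, ∃ s, IsCompatible F s ∧ ∀ y ∈ closedBall x (r j), ψ s y < ρ := by
    by_contra! hall
    refine hx (isMarked_of_forall_isCompatible hF fun s hs => ?_)
    by_contra! hlt
    obtain ⟨i, hi⟩ := hcont s hlt
    obtain ⟨y, hy, hy'⟩ := hall i s hs
    exact (hi y hy).not_ge hy'
  have hlt : k < Nat.find hex := by
    by_contra! hle
    obtain ⟨s, hs, hsρ⟩ := Nat.find_spec hex
    obtain ⟨y, hy, hy'⟩ := hk s hs
    exact (hsρ y (closedBall_subset_closedBall (hr hle) hy)).not_ge hy'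
  have hsucc : Nat.find hex - 1 + 1 = Nat.find hex := Nat.sub_add_cancel (by omega)
  refine ⟨Nat.find hex - 1, by omega, fun s hs => ?_, hsucc.symm ▸ Nat.find_spec hex⟩
  have hnot := Nat.find_min hex (m := Nat.find hex - 1) (by omega)
  push Not at hnot
  exact hnot s hs

variable [IsUltrametricDist X]

theorem exists_pairwiseDisjoint_closedBall_cover (hr : Antitone r) (hr0 : ∀ k, 0 ≤ r k) {A : Set X}
    {P : Set X → Prop} (h : ∀ x ∈ A, ∃ i ≥ k, P (closedBall x (r i))) :
    ∃ 𝓑 : Set (Set X), 𝓑.PairwiseDisjoint id ∧ A ⊆ ⋃₀ 𝓑 ∧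
      ∀ B ∈ 𝓑, P B ∧ ∃ x ∈ A, ∃ i ≥ k, B = closedBall x (r i) := by
  classical
  have hmin : ∀ x ∈ A, ∃ i ≥ k, P (closedBall x (r i)) ∧
      ∀ j ≥ k, P (closedBall x (r j)) → i ≤ j := fun x hx =>
    ⟨_, (Nat.find_spec (h x hx)).1, (Nat.find_spec (h x hx)).2,
      fun j hj hj' => Nat.find_min' (h x hx) ⟨hj, hj'⟩⟩
  choose! i hik hi hi_le using hmin
  set E : X → Set X := fun x => closedBall x (r (i x))
  have heq_of_le : ∀ x ∈ A, ∀ y ∈ A, i x ≤ i y → ¬ Disjoint (E x) (E y) → E x = E y := by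
    intro x hx y hy hle hxy
    obtain ⟨z, hzx, hzy⟩ := Set.not_disjoint_iff.mp hxy
    have hball : closedBall x (r (i x)) = closedBall y (r (i x)) := by
      rw [IsUltrametricDist.closedBall_eq_of_mem hzx,
        IsUltrametricDist.closedBall_eq_of_mem (closedBall_subset_closedBall (hr hle) hzy)]
    have hyx : i y ≤ i x := hi_le y hy _ (hik x hx) (hball ▸ hi x hx)
    simp only [E, hball, hle.antisymm hyx]
  refine ⟨E '' A, ?_, fun x hx => ⟨E x, ⟨x, hx, rfl⟩, mem_closedBall_self (hr0 _)⟩, ?_⟩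
  · rintro _ ⟨x, hx, rfl⟩ _ ⟨y, hy, rfl⟩ hne
    by_contra hxy
    rcases le_total (i x) (i y) with hle | hle
    · exact hne (heq_of_le x hx y hy hle hxy)
    · exact hne (heq_of_le y hy x hx hle fun h => hxy h.symm).symm
  · rintro _ ⟨x, hx, rfl⟩
    exact ⟨hi x hx, x, hx, i x, hik x hx, rfl⟩

variable [MeasurableSpace X] [OpensMeasurableSpace X] {μ : Measure X}

theorem measure_le_mul_of_forall_exists_closedBall [TopologicalSpace.SeparableSpace X]
    (hr : Antitone r) (hr0 : ∀ k, 0 < r k) {A : Set X} {a : X} (hA : A ⊆ closedBall a (r k))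
    {c : ℝ≥0∞}
    (h : ∀ x ∈ A, ∃ i ≥ k, μ (closedBall x (r i) ∩ A) ≤ c * μ (closedBall x (r i))) :
    μ A ≤ c * μ (closedBall a (r k)) := by
  obtain ⟨𝓑, hdisj, hcover, h𝓑⟩ := exists_pairwiseDisjoint_closedBall_cover hr (hr0 · |>.le)
    (P := fun B => μ (B ∩ A) ≤ c * μ B) h
  have hopen : ∀ B ∈ 𝓑, IsOpen B := fun B hB => by
    obtain ⟨-, x, -, i, -, rfl⟩ := h𝓑 B hB
    exact IsUltrametricDist.isOpen_closedBall x (hr0 i).ne'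
  have hcount : 𝓑.Countable := hdisj.countable_of_isOpen hopen fun B hB => by
    obtain ⟨-, x, -, i, -, rfl⟩ := h𝓑 B hB
    exact nonempty_closedBall.mpr (hr0 i).le
  calc μ A ≤ μ (⋃ B ∈ 𝓑, B ∩ A) := measure_mono fun x hx => by
        obtain ⟨B, hB, hxB⟩ := hcover hx
        exact Set.mem_biUnion hB ⟨hxB, hx⟩
    _ ≤ ∑' B : 𝓑, μ (B ∩ A) := measure_biUnion_le μ hcount _
    _ ≤ ∑' B : 𝓑, c * μ B := ENNReal.tsum_le_tsum fun B => (h𝓑 B B.2).1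
    _ = c * μ (⋃₀ 𝓑) := by
        rw [ENNReal.tsum_mul_left,
          measure_sUnion hcount hdisj fun B hB => (hopen B hB).measurableSet]
    _ ≤ c * μ (closedBall a (r k)) := by
        gcongr
        refine Set.sUnion_subset fun B hB => ?_
        obtain ⟨-, x, hx, i, hik, rfl⟩ := h𝓑 B hB
        rw [IsUltrametricDist.closedBall_eq_of_mem (hA hx)]
        exact closedBall_subset_closedBall (hr hik)

theorem measure_not_isMarked_le [TopologicalSpace.SeparableSpace X] (hr : Antitone r)
    (hr0 : ∀ k, 0 < r k) {K θ : ℝ≥0∞} {o : X}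
    (hK : ∀ x k, μ (closedBall x (r k)) ≤ K * μ (closedBall x (r (k + 1)))) {D : ℕ}
    (hD : ∀ G : Finset S, IsChain (· ≤ ·) (G : Set S) → G.card ≤ D)
    (hgood : ∀ s, ∀ a ∈ closedBall o (r 0), ∀ k, (∃ x ∈ closedBall a (r k), ρ ≤ ψ s x) →
      μ {x ∈ closedBall a (r k) | ψ s x < ε} ≤ θ * μ (closedBall a (r k)))
    (hcont : ∀ s, ∀ x ∈ closedBall o (r 0), ψ s x < ρ →
      ∃ i, ∀ y ∈ closedBall x (r i), ψ s y < ρ)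
    {m : ℕ} (hF : IsChain (· ≤ ·) (F : Set S)) (hm : D ≤ F.card + m) {a : X}
    (ha : a ∈ closedBall o (r 0))
    (hsup : ∀ s, IsCompatible F s → ∃ x ∈ closedBall a (r k), ρ ≤ ψ s x) :
    μ {x ∈ closedBall a (r k) | ¬ IsMarked ψ ε ρ F x} ≤
      markingConst K m * θ * μ (closedBall a (r k)) := by
  classical
  induction m generalizing F a k with
  | zero =>
    have hnone : ∀ s, ¬ IsCompatible F s := fun s hs => by
      have hcard := hD _ hs.isChain_insert
      rw [Finset.card_insert_of_notMem hs.1] at hcard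
      omega
    have hmarked x : IsMarked ψ ε ρ F x :=
      isMarked_of_forall_isCompatible hF fun s hs => absurd hs (hnone s)
    simp only [hmarked, not_true_eq_false, and_false, Set.ofPred_false, measure_empty, zero_le]
  | succ m ih =>
    refine measure_le_mul_of_forall_exists_closedBall hr hr0 (Set.sep_subset _ _) ?_
    rintro x ⟨hxa, hx⟩
    have hxo : x ∈ closedBall o (r 0) := by
      rw [IsUltrametricDist.closedBall_eq_of_mem ha]
      exact closedBall_subset_closedBall (hr k.zero_le) hxa
    rw [IsUltrametricDist.closedBall_eq_of_mem hxa] at hsup ⊢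
    obtain ⟨j, hkj, hsupj, s, hs, hsρ⟩ :=
      exists_last_closedBall_forall_isCompatible hr hF (fun s => hcont s x hxo) hsup hx
    refine ⟨j + 1, by omega, ?_⟩
    have hj := closedBall_subset_closedBall (x := x) (hr j.le_succ)
    calc _ ≤ μ {y ∈ closedBall x (r (j + 1)) | ¬ IsMarked ψ ε ρ F y} :=
          measure_mono <| Set.inter_subset_inter_right _ fun y hy => hy.2
      _ ≤ _ := measure_not_isMarked_le_add hj hsρ
      _ ≤ θ * μ (closedBall x (r j)) + markingConst K m * θ * μ (closedBall x (r j)) := by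
          gcongr
          · exact hgood s x hxo j (hsupj s hs)
          · refine ih hs.isChain_insert ?_ hxo fun t ht => hsupj t ht.of_insert
            rw [Finset.card_insert_of_notMem hs.1]
            omega
      _ = (1 + markingConst K m) * θ * μ (closedBall x (r j)) := by ring
      _ ≤ (1 + markingConst K m) * θ * (K * μ (closedBall x (r (j + 1)))) := by
          gcongr
          exact hK x j
      _ = markingConst K (m + 1) * θ * μ (closedBall x (r (j + 1))) := by
          rw [markingConst]; ring

end Marking

/-! ### Minors and Minkowski's theorem -/

section Minors

variable {κ ι : Type*} [Fintype κ] [DecidableEq κ] [Fintype ι]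

open Matrix

theorem det_mul_eq_zero_of_forall_det_submatrix_eq_zero {R : Type*} [CommRing R]
    {A : Matrix κ ι R} (h : ∀ I : κ → ι, (A.submatrix id I).det = 0) (B : Matrix ι κ R) :
    (A * B).det = 0 := by
  classical
  have hrows : (A * B)ᵀ = fun k => ∑ l, B l k • Aᵀ l := by
    ext k i
    simp [Matrix.mul_apply, mul_comm]
  rw [← det_transpose, hrows]
  refine ((detRowAlternating (R := R) (n := κ)).toMultilinearMap.map_sum
    fun k l => B l k • Aᵀ l).trans (Finset.sum_eq_zero fun I _ => ?_)
  refine ((detRowAlternating (R := R) (n := κ)).toMultilinearMap.map_smul_univ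
    (fun k => B (I k) k) fun k => Aᵀ (I k)).trans ?_
  have hI : (detRowAlternating (R := R) (n := κ)).toMultilinearMap (fun k => Aᵀ (I k)) = 0 := by
    rw [← h I, ← det_transpose (A.submatrix id I)]
    rfl
  rw [hI, smul_zero]

omit [Fintype ι] in
theorem exists_det_submatrix_ne_zero [Finite ι] {R : Type*} [CommRing R] [LinearOrder R]
    [IsStrictOrderedRing R] {U : Matrix κ ι R} (hU : LinearIndependent R U.row) :
    ∃ I : κ → ι, (U.submatrix id I).det ≠ 0 := by
  have := Fintype.ofFinite ι
  by_contra! hminor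
  obtain ⟨c, hc0, hc⟩ := exists_vecMul_eq_zero_iff.mpr
    (det_mul_eq_zero_of_forall_det_submatrix_eq_zero hminor Uᵀ)
  have hself : (c ᵥ* U) ⬝ᵥ (c ᵥ* U) = 0 := by
    have h : (c ᵥ* (U * Uᵀ)) ⬝ᵥ c = 0 := by rw [hc, zero_dotProduct]
    rwa [← vecMul_vecMul, ← dotProduct_mulVec, mulVec_transpose] at h
  refine hc0 (vecMul_injective_iff.mpr hU ?_)
  simpa using dotProduct_self_eq_zero.mp hself

/-- The height of the rows of `A`: the largest absolute value of a maximal minor, which is the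
sup norm of the wedge product of the rows. Minors with repeated columns vanish, so all maps
`κ → ι` are allowed as column selections. -/
noncomputable def maxMinor (A : Matrix κ ι ℝ) : ℝ :=
  ‖fun I : κ → ι => (A.submatrix id I).det‖

theorem maxMinor_nonneg (A : Matrix κ ι ℝ) : 0 ≤ maxMinor A := norm_nonneg _

theorem abs_det_submatrix_le_maxMinor (A : Matrix κ ι ℝ) (I : κ → ι) :
    |(A.submatrix id I).det| ≤ maxMinor A :=
  norm_le_pi_norm (fun I : κ → ι => (A.submatrix id I).det) I

theorem exists_abs_det_submatrix_eq_maxMinor {A : Matrix κ ι ℝ} (hA : maxMinor A ≠ 0) :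
    ∃ I : κ → ι, |(A.submatrix id I).det| = maxMinor A := by
  have : Nonempty (κ → ι) := by
    by_contra hempty
    rw [not_nonempty_iff] at hempty
    exact hA (norm_of_subsingleton _)
  obtain ⟨I, hI⟩ := Finite.exists_max fun I : κ → ι => |(A.submatrix id I).det|
  exact ⟨I, (abs_det_submatrix_le_maxMinor A I).antisymm
    ((pi_norm_le_iff_of_nonneg (abs_nonneg _)).mpr hI)⟩

theorem maxMinor_mul (A : Matrix κ κ ℝ) (V : Matrix κ ι ℝ) :
    maxMinor (A * V) = |A.det| * maxMinor V := by
  rw [maxMinor, maxMinor, ← Real.norm_eq_abs, ← norm_smul]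
  congr 1
  ext I
  rw [Pi.smul_apply, smul_eq_mul, ← det_mul]
  rfl

theorem maxMinor_cons_le {j : ℕ} (w : ι → ℝ) (V : Fin j → ι → ℝ) :
    maxMinor (of (Fin.cons w V : Fin (j + 1) → ι → ℝ)) ≤ (j + 1) * (‖w‖ * maxMinor (of V)) := by
  refine (pi_norm_le_iff_of_nonneg (by have := maxMinor_nonneg (of V); positivity)).mpr fun I => ?_
  rw [det_succ_row_zero]
  calc _ ≤ ∑ _k : Fin (j + 1), ‖w‖ * maxMinor (of V) := by
        refine (norm_sum_le _ _).trans (Finset.sum_le_sum fun k _ => ?_)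
        rw [norm_mul, norm_mul, norm_pow, norm_neg, norm_one, one_pow, one_mul]
        exact mul_le_mul (norm_le_pi_norm w (I k))
          (abs_det_submatrix_le_maxMinor (of V) fun l => I (k.succAbove l))
          (norm_nonneg _) (norm_nonneg _)
    _ = _ := by simp

theorem exists_int_norm_vecMul_le_of_abs_det_le {A : Matrix κ κ ℝ} (hA : A.det ≠ 0)
    {r : ℝ} (hr : 0 ≤ r) (hdet : |A.det| ≤ r ^ Fintype.card κ) (hκ : 0 < Fintype.card κ) :
    ∃ c : κ → ℤ, c ≠ 0 ∧ ‖(fun i => (c i : ℝ)) ᵥ* A‖ ≤ r := by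
  have : Nonempty κ := Fintype.card_pos_iff.mp hκ
  have hli : LinearIndependent ℝ A.row := linearIndependent_rows_of_det_ne_zero hA
  let b : Module.Basis κ ℝ (κ → ℝ) := basisOfLinearIndependentOfCardEqFinrank hli (by simp)
  have hb : (b : κ → κ → ℝ) = A := coe_basisOfLinearIndependentOfCardEqFinrank hli _
  let L := (Submodule.span ℤ (Set.range b)).toAddSubgroup
  have : Countable L := inferInstanceAs (Countable (Submodule.span ℤ (Set.range b)))
  have : DiscreteTopology L := inferInstanceAs (DiscreteTopology (Submodule.span ℤ (Set.range b)))
  have hvol : volume (ZSpan.fundamentalDomain b) * 2 ^ Module.finrank ℝ (κ → ℝ) ≤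
      volume (closedBall (0 : κ → ℝ) r) := by
    have hofA : of (A : κ → κ → ℝ) = A := rfl
    rw [ZSpan.volume_fundamentalDomain, Real.volume_pi_closedBall _ hr, hb, hofA,
      Module.finrank_fintype_fun_eq_card, mul_pow, mul_comm, ENNReal.ofReal_mul (by positivity),
      ENNReal.ofReal_pow zero_le_two, ENNReal.ofReal_ofNat]
    gcongr
  obtain ⟨x, hx0, hx⟩ := exists_ne_zero_mem_lattice_of_measure_mul_two_pow_le_measure (L := L)
    (ZSpan.isAddFundamentalDomain' b volume) (fun x hx => by simpa using hx)
    (convex_closedBall _ _) (isCompact_closedBall _ _) hvol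
  obtain ⟨c, hc⟩ := Submodule.mem_span_range_iff_exists_fun ℤ |>.mp x.2
  have hcx : (fun i => (c i : ℝ)) ᵥ* A = (x : κ → ℝ) := by
    rw [← hc, hb]
    ext k
    simp [vecMul, dotProduct]
  refine ⟨c, ?_, by rwa [hcx, ← mem_closedBall_zero_iff]⟩
  rintro rfl
  exact hx0 (Subtype.ext (by rw [← hc]; simp))

theorem norm_vecMul_le_of_abs_det_submatrix_eq_maxMinor {V : Matrix κ ι ℝ} {I : κ → ι}
    (hV : maxMinor V ≠ 0) (hI : |(V.submatrix id I).det| = maxMinor V) (x : κ → ℝ) :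
    ‖x ᵥ* V‖ ≤ Fintype.card κ * ‖x ᵥ* V.submatrix id I‖ := by
  classical
  set A := V.submatrix id I
  refine (pi_norm_le_iff_of_nonneg (by positivity)).mpr fun l => ?_
  let v : κ → ℝ := fun i => V i l
  have hcramer : A.det * (x ᵥ* V) l = (x ᵥ* A) ⬝ᵥ cramer A v := by
    rw [← dotProduct_mulVec, mulVec_cramer, dotProduct_smul]
    rfl
  have hle : ∀ k, |cramer A v k| ≤ maxMinor V := by
    intro k
    have hupdate : A.updateCol k v = V.submatrix id (Function.update I k l) := by
      ext i k'
      by_cases h : k' = k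
      · subst h; simp [v]
      · simp [h, A]
    rw [cramer_apply, hupdate]
    exact abs_det_submatrix_le_maxMinor _ _
  refine le_of_mul_le_mul_left ?_ ((maxMinor_nonneg V).lt_of_ne' hV)
  calc maxMinor V * ‖(x ᵥ* V) l‖ = |(x ᵥ* A) ⬝ᵥ cramer A v| := by
        rw [← hcramer, abs_mul, hI, Real.norm_eq_abs]
    _ ≤ ∑ _k : κ, ‖x ᵥ* A‖ * maxMinor V := by
        refine (Finset.abs_sum_le_sum_abs _ _).trans (Finset.sum_le_sum fun k _ => ?_)
        rw [abs_mul]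
        exact mul_le_mul (norm_le_pi_norm (x ᵥ* A) k) (hle k) (abs_nonneg _) (norm_nonneg _)
    _ = maxMinor V * (Fintype.card κ * ‖x ᵥ* A‖) := by simp; ring

theorem exists_int_norm_vecMul_le (hκ : 0 < Fintype.card κ) {V : Matrix κ ι ℝ}
    (hV : maxMinor V ≠ 0) :
    ∃ c : κ → ℤ, c ≠ 0 ∧ ‖(fun i => (c i : ℝ)) ᵥ* V‖ ≤
      Fintype.card κ * maxMinor V ^ ((Fintype.card κ : ℝ)⁻¹) := by
  obtain ⟨I, hI⟩ := exists_abs_det_submatrix_eq_maxMinor hV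
  have hdet : (V.submatrix id I).det ≠ 0 := by rwa [← abs_ne_zero, hI]
  have hpow : |(V.submatrix id I).det| ≤
      (maxMinor V ^ ((Fintype.card κ : ℝ)⁻¹)) ^ Fintype.card κ := by
    rw [hI, Real.rpow_inv_natCast_pow (maxMinor_nonneg V) hκ.ne']
  obtain ⟨c, hc0, hc⟩ := exists_int_norm_vecMul_le_of_abs_det_le hdet
    (Real.rpow_nonneg (maxMinor_nonneg V) _) hpow hκ
  refine ⟨c, hc0, (norm_vecMul_le_of_abs_det_submatrix_eq_maxMinor hV hI _).trans ?_⟩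
  gcongr

end Minors

/-! ### Integral points of rational subspaces -/

section Finrank

variable {K V : Type*} [Field K] [AddCommGroup V] [Module K V]

theorem finrank_sup_span_singleton {W : Submodule K V} [FiniteDimensional K W] {v : V}
    (hv : v ∉ W) :
    Module.finrank K (W ⊔ Submodule.span K {v} : Submodule K V) = Module.finrank K W + 1 := by
  have hv0 : v ≠ 0 := by rintro rfl; exact hv W.zero_mem
  have hinf : W ⊓ Submodule.span K {v} = ⊥ :=
    ((Submodule.disjoint_span_singleton' hv0).mpr hv).eq_bot
  have h := Submodule.finrank_sup_add_finrank_inf_eq W (Submodule.span K {v})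
  rwa [hinf, finrank_bot, finrank_span_singleton hv0] at h

theorem card_le_finrank_add_one_of_isChain [FiniteDimensional K V] {G : Finset (Submodule K V)}
    (hG : IsChain (· ≤ ·) (G : Set (Submodule K V))) : G.card ≤ Module.finrank K V + 1 := by
  have hmaps : Set.MapsTo (fun W : Submodule K V => Module.finrank K W) G
      (Finset.range (Module.finrank K V + 1)) := fun W _ => by
    simpa [Nat.lt_succ_iff] using W.finrank_le
  have hinj : Set.InjOn (fun W : Submodule K V => Module.finrank K W) G := by
    intro W hW W' hW' h
    rcases hG.total hW hW' with hle | hle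
    · exact Submodule.eq_of_le_of_finrank_eq hle h
    · exact (Submodule.eq_of_le_of_finrank_eq hle h.symm).symm
  simpa using Finset.card_le_card_of_injOn _ hmaps hinj

end Finrank

section IntegralPoints

variable {ι : Type*}

open scoped nonZeroDivisors

/-- The coordinatewise inclusion `ℤ^ι → ℚ^ι`. -/
def intToRat (ι : Type*) : (ι → ℤ) →ₗ[ℤ] (ι → ℚ) :=
  LinearMap.pi fun i => Algebra.linearMap ℤ ℚ ∘ₗ LinearMap.proj i

theorem intToRat_injective : Function.Injective (intToRat ι) := fun _ _ h =>
  funext fun i => Int.cast_injective (α := ℚ) (congrFun h i)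

/-- The lattice of integral points of a rational subspace. -/
def integralPoints (W : Submodule ℚ (ι → ℚ)) : Submodule ℤ (ι → ℤ) :=
  (W.restrictScalars ℤ).comap (intToRat ι)

theorem mem_integralPoints {W : Submodule ℚ (ι → ℚ)} {q : ι → ℤ} :
    q ∈ integralPoints W ↔ intToRat ι q ∈ W := Iff.rfl

theorem integralPoints_mono {W V : Submodule ℚ (ι → ℚ)} (h : W ≤ V) :
    integralPoints W ≤ integralPoints V := fun _ hq => h hq

theorem mem_of_zsmul_mem_integralPoints {W : Submodule ℚ (ι → ℚ)} {c : ℤ} (hc : c ≠ 0)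
    {q : ι → ℤ} (h : c • q ∈ integralPoints W) : q ∈ integralPoints W := by
  rw [mem_integralPoints, map_zsmul, ← Int.cast_smul_eq_zsmul ℚ] at h
  exact (W.smul_mem_iff (Int.cast_ne_zero.mpr hc)).mp h

variable [Finite ι]

instance isLocalizedModule_intToRat : IsLocalizedModule ℤ⁰ (intToRat ι) :=
  inferInstanceAs (IsLocalizedModule ℤ⁰
    (LinearMap.pi fun i => Algebra.linearMap ℤ ℚ ∘ₗ LinearMap.proj i))

theorem finrank_integralPoints (W : Submodule ℚ (ι → ℚ)) :
    Module.finrank ℤ (integralPoints W) = Module.finrank ℚ W := by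
  have hW : (integralPoints W).localized' ℚ ℤ⁰ (intToRat ι) = W :=
    (Submodule.localized'gi ℚ ℤ⁰ (intToRat ι)).l_u_eq W
  rw [← IsLocalizedModule.finrank_eq ℤ⁰
      ((integralPoints W).toLocalized' ℚ ℤ⁰ (intToRat ι)) le_rfl,
    ← IsLocalization.finrank_eq ℚ ℤ⁰ le_rfl, hW]

/-- A `ℤ`-basis of the lattice of integral points of `W`, as the rows of a matrix. -/
noncomputable def integralBasis (W : Submodule ℚ (ι → ℚ)) :
    Matrix (Fin (Module.finrank ℚ W)) ι ℤ :=
  Matrix.of fun i => (Module.finBasisOfFinrankEq ℤ (integralPoints W)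
    (finrank_integralPoints W) i : ι → ℤ)

theorem linearIndependent_integralBasis (W : Submodule ℚ (ι → ℚ)) :
    LinearIndependent ℤ (integralBasis W).row :=
  (Module.finBasisOfFinrankEq ℤ (integralPoints W)
    (finrank_integralPoints W)).linearIndependent.map' (integralPoints W).subtype
    (Submodule.ker_subtype _)

theorem span_range_integralBasis (W : Submodule ℚ (ι → ℚ)) :
    Submodule.span ℤ (Set.range (integralBasis W).row) = integralPoints W := by
  let b := Module.finBasisOfFinrankEq ℤ (integralPoints W) (finrank_integralPoints W)
  have hrow : (integralBasis W).row = (integralPoints W).subtype ∘ b := rfl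
  rw [hrow, Set.range_comp, Submodule.span_image, b.span_eq, Submodule.map_subtype_top]

end IntegralPoints

/-! ### Covolumes of twisted lattices -/

section Covolume

variable {κ ι : Type*} [Fintype κ] [Fintype ι]

open Matrix

/-- The action of the diagonal element `diag(p^{-t_l})` on an integer vector. -/
noncomputable def weighted (t : ι → ℕ) (q : ι → ℤ) : ι → ℝ := fun l => q l * ((p : ℝ) ^ t l)⁻¹

variable {p} in
/-- The `p`-adic linear form `q ↦ ∑ q_l y_l` on integer vectors. -/
noncomputable def linForm (y : ι → ℚ_[p]) (q : ι → ℤ) : ℚ_[p] := ∑ l, (q l : ℚ_[p]) * y l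

/-- The covolume of the lattice spanned by the rows of `U` after applying, at the place `p`, the
unipotent element attached to `y`, which turns `linForm y` into a coordinate, and then a dilation of
that coordinate by `p^T`, `T = ∑ t_l`, in absolute value, and at the real place `diag(p^{-t_l})`. -/
noncomputable def covolume (t : ι → ℕ) (y : ι → ℚ_[p]) [DecidableEq κ] (U : Matrix κ ι ℤ) : ℝ :=
  maxMinor (of fun i => weighted p t (U i)) *
    max 1 ((p : ℝ) ^ (∑ l, t l) * ‖fun i => linForm y (U i)‖)

theorem linForm_vecMul (y : ι → ℚ_[p]) (c : κ → ℤ) (U : Matrix κ ι ℤ) :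
    linForm y (c ᵥ* U) = ∑ i, (c i : ℚ_[p]) * linForm y (U i) := by
  simp only [linForm, vecMul, dotProduct, Finset.mul_sum, Int.cast_sum, Int.cast_mul,
    Finset.sum_mul, mul_assoc]
  exact Finset.sum_comm

theorem norm_linForm_vecMul_le {y : ι → ℚ_[p]} (c : κ → ℤ) {U : Matrix κ ι ℤ} {B : ℝ} (hB : 0 ≤ B)
    (h : ∀ i, ‖linForm y (U i)‖ ≤ B) : ‖linForm y (c ᵥ* U)‖ ≤ B := by
  rw [linForm_vecMul]
  refine IsUltrametricDist.norm_sum_le_of_forall_le_of_nonneg hB fun i _ => ?_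
  rw [norm_mul]
  exact (mul_le_of_le_one_left (norm_nonneg _) (Padic.norm_int_le_one _)).trans (h i)

omit [Fact p.Prime] [Fintype ι] in
theorem weighted_vecMul (t : ι → ℕ) (c : κ → ℤ) (U : Matrix κ ι ℤ) :
    weighted p t (c ᵥ* U) = (fun i => (c i : ℝ)) ᵥ* of fun i => weighted p t (U i) := by
  ext l
  simp [weighted, vecMul, dotProduct, Finset.sum_mul, mul_assoc]

omit [Fact p.Prime] in
theorem maxMinor_weighted_mul [DecidableEq κ] (t : ι → ℕ) (A : Matrix κ κ ℤ) (U : Matrix κ ι ℤ) :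
    maxMinor (of fun i => weighted p t ((A * U) i)) =
      |(A.det : ℝ)| * maxMinor (of fun i => weighted p t (U i)) := by
  have hrow : (of fun i => weighted p t ((A * U) i)) =
      A.map (Int.cast : ℤ → ℝ) * of fun i => weighted p t (U i) :=
    funext fun i => weighted_vecMul p t (A i) U
  have hdet : (A.map (Int.cast : ℤ → ℝ)).det = A.det := ((Int.castRingHom ℝ).map_det A).symm
  rw [hrow, maxMinor_mul, hdet]

theorem maxMinor_weighted_ne_zero [DecidableEq κ] (t : ι → ℕ) {U : Matrix κ ι ℤ}
    (hU : LinearIndependent ℤ U.row) : maxMinor (of fun i => weighted p t (U i)) ≠ 0 := by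
  obtain ⟨I, hI⟩ := exists_det_submatrix_ne_zero hU
  have hminor : ((of fun i => weighted p t (U i)).submatrix id I) =
      (U.submatrix id I).map (Int.cast : ℤ → ℝ) * diagonal fun k => ((p : ℝ) ^ t (I k))⁻¹ := by
    ext i k
    simp [weighted, mul_diagonal]
  have hcast : ((U.submatrix id I).map (Int.cast : ℤ → ℝ)).det = (U.submatrix id I).det :=
    ((Int.castRingHom ℝ).map_det _).symm
  refine ((abs_pos.mpr ?_).trans_le (abs_det_submatrix_le_maxMinor _ I)).ne'
  rw [hminor, det_mul, det_diagonal, hcast]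
  exact mul_ne_zero (Int.cast_ne_zero.mpr hI)
    (Finset.prod_ne_zero_iff.mpr fun k _ => inv_ne_zero (pow_ne_zero _ (prime_pos p).ne'))

theorem covolume_nonneg [DecidableEq κ] (t : ι → ℕ) (y : ι → ℚ_[p]) (U : Matrix κ ι ℤ) :
    0 ≤ covolume p t y U :=
  mul_nonneg (maxMinor_nonneg _) (zero_le_one.trans (le_max_left _ _))

theorem covolume_le_one_of_isEmpty [DecidableEq κ] [IsEmpty κ] (t : ι → ℕ) (y : ι → ℚ_[p])
    (U : Matrix κ ι ℤ) : covolume p t y U ≤ 1 := by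
  have hminor : maxMinor (of fun i => weighted p t (U i)) ≤ 1 :=
    (pi_norm_le_iff_of_nonneg zero_le_one).mpr fun I => by simp
  rw [covolume, norm_of_subsingleton]
  simpa using hminor

theorem one_le_covolume_of_isEmpty [DecidableEq κ] [IsEmpty κ] (t : ι → ℕ) (y : ι → ℚ_[p])
    (U : Matrix κ ι ℤ) : 1 ≤ covolume p t y U := by
  have hminor := abs_det_submatrix_le_maxMinor (of fun i => weighted p t (U i))
    (isEmptyElim (α := κ))
  rw [det_isEmpty, abs_one] at hminor
  exact one_le_mul_of_one_le_of_one_le hminor (le_max_left _ _)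

/-! ### A lower bound for covolumes -/

theorem exists_pow_mul_norm_eq_pow {T : ℕ} {x : ℚ_[p]} (h : 1 < (p : ℝ) ^ T * ‖x‖) :
    ∃ e : ℕ, (p : ℝ) ^ T * ‖x‖ = (p : ℝ) ^ e := by
  have hx : x ≠ 0 := by
    rintro rfl
    norm_num at h
  have hpow : (p : ℝ) ^ T * ‖x‖ = (p : ℝ) ^ ((T : ℤ) - x.valuation) := by
    rw [Padic.norm_eq_zpow_neg_valuation hx, sub_eq_add_neg, zpow_add₀ (prime_pos p).ne',
      zpow_natCast]
  rw [hpow, one_lt_zpow_iff_right₀ (one_lt_prime p)] at h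
  exact ⟨((T : ℤ) - x.valuation).toNat, by rw [hpow, ← zpow_natCast, Int.toNat_of_nonneg h.le]⟩

theorem exists_int_norm_sub_le {x : ℚ_[p]} (hx : ‖x‖ ≤ 1) (e : ℕ) :
    ∃ c : ℤ, ‖x - c‖ ≤ ((p : ℝ) ^ e)⁻¹ := by
  rw [← mem_closedBall_zero_iff, closedBall_zero_one_eq_biUnion e] at hx
  obtain ⟨i, -, hi⟩ := Set.mem_iUnion₂.mp hx
  refine ⟨i, ?_⟩
  rwa [mem_closedBall, dist_eq_norm, radius, inv_pow] at hi

theorem exists_norm_eq_norm_apply {E : Type*} [SeminormedAddGroup E] [Nonempty κ] (r : κ → E) :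
    ∃ i, ‖r‖ = ‖r i‖ := by
  obtain ⟨i, hi⟩ := Finite.exists_max fun i => ‖r i‖
  exact ⟨i, ((pi_norm_le_iff_of_nonneg (norm_nonneg _)).mpr hi).antisymm (norm_le_pi_norm r i)⟩

theorem exists_int_det_eq_and_norm_sum_le [DecidableEq κ] (T : ℕ) (r : κ → ℚ_[p]) :
    ∃ P : Matrix κ κ ℤ, (P.det : ℝ) = max 1 ((p : ℝ) ^ T * ‖r‖) ∧
      ∀ i, ‖∑ k, (P i k : ℚ_[p]) * r k‖ ≤ ((p : ℝ) ^ T)⁻¹ := by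
  have hpT : 0 < (p : ℝ) ^ T := pow_pos (prime_pos p) T
  rcases le_or_gt ((p : ℝ) ^ T * ‖r‖) 1 with hle | hlt
  · refine ⟨1, by simp [hle], fun i => ?_⟩
    have hrow : ∑ k, ((1 : Matrix κ κ ℤ) i k : ℚ_[p]) * r k = r i := by simp [one_apply]
    rw [hrow, ← one_div, le_div_iff₀' hpT]
    exact (mul_le_mul_of_nonneg_left (norm_le_pi_norm r i) hpT.le).trans hle
  have : Nonempty κ := by
    by_contra hempty
    rw [not_nonempty_iff] at hempty
    norm_num [norm_of_subsingleton r] at hlt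
  obtain ⟨i₀, hi₀⟩ := exists_norm_eq_norm_apply r
  rw [hi₀] at hlt
  obtain ⟨e, he⟩ := exists_pow_mul_norm_eq_pow p hlt
  have hr₀ : 0 < ‖r i₀‖ := pos_of_mul_pos_right (zero_lt_one.trans hlt) hpT.le
  have happrox : ∀ i, ∃ c : ℤ, (i = i₀ → c = 1 - (p : ℤ) ^ e) ∧
      ‖r i / r i₀ - c‖ ≤ ((p : ℝ) ^ e)⁻¹ := by
    intro i
    rcases eq_or_ne i i₀ with rfl | hi
    · refine ⟨1 - (p : ℤ) ^ e, fun _ => rfl, ?_⟩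
      rw [div_self (norm_pos_iff.mp hr₀)]
      simp
    · obtain ⟨c, hc⟩ := exists_int_norm_sub_le p (x := r i / r i₀)
        (by rw [norm_div, ← hi₀]; exact div_le_one_of_le₀ (norm_le_pi_norm r i) (norm_nonneg _)) e
      exact ⟨c, fun h => absurd h hi, hc⟩
  choose c hc₀ hc using happrox
  let P : Matrix κ κ ℤ := 1 + replicateCol Unit (-c) * replicateRow Unit (Pi.single i₀ (1 : ℤ))
  refine ⟨P, ?_, fun i => ?_⟩
  · rw [det_one_add_replicateCol_mul_replicateRow, hi₀, max_eq_right hlt.le, he]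
    simp [hc₀ i₀ rfl]
  · have hrow : ∑ k, (P i k : ℚ_[p]) * r k = (r i / r i₀ - c i) * r i₀ := by
      rw [sub_mul, div_mul_cancel₀ _ (norm_pos_iff.mp hr₀)]
      simp [P, mul_apply, one_apply, Pi.single_apply, add_mul, Finset.sum_add_distrib,
        ← sub_eq_add_neg]
    rw [hrow, norm_mul]
    calc _ ≤ ((p : ℝ) ^ e)⁻¹ * ‖r i₀‖ := by gcongr; exact hc i
      _ = ((p : ℝ) ^ T)⁻¹ := by rw [← he]; field_simp

theorem pow_le_covolume [DecidableEq κ] {m : ℕ} (hκ : Fintype.card κ ≤ m) {t : ι → ℕ}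
    {y : ι → ℚ_[p]} {U : Matrix κ ι ℤ} (hU : LinearIndependent ℤ U.row) {η : ℝ} (hη : 0 < η)
    (hηm : η ≤ m)
    (H : ∀ q : ι → ℤ, q ≠ 0 → ‖linForm y q‖ ≤ ((p : ℝ) ^ ∑ l, t l)⁻¹ → η ≤ ‖weighted p t q‖) :
    (η / m) ^ m ≤ covolume p t y U := by
  have hm : (0 : ℝ) < m := hη.trans_le hηm
  have hηm' : η / m ≤ 1 := (div_le_one hm).mpr hηm
  rcases isEmpty_or_nonempty κ with hempty | hne
  · exact (pow_le_one₀ (by positivity) hηm').trans (one_le_covolume_of_isEmpty p t y U)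
  have hκ0 : 0 < Fintype.card κ := Fintype.card_pos
  obtain ⟨P, hdet, hP⟩ :=
    exists_int_det_eq_and_norm_sum_le p (∑ l, t l) fun i => linForm y (U i)
  have hdet1 : (1 : ℝ) ≤ P.det := hdet ▸ le_max_left _ _
  have hdet0 : P.det ≠ 0 := by
    rintro h
    norm_num [h] at hdet1
  have hinj : Function.Injective fun c : κ → ℤ => c ᵥ* (P * U) := by
    simp_rw [← vecMul_vecMul]
    exact (vecMul_injective_iff.mpr hU).comp
      (vecMul_injective_iff.mpr (linearIndependent_rows_of_det_ne_zero hdet0))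
  have hcov : maxMinor (of fun i => weighted p t ((P * U) i)) = covolume p t y U := by
    rw [maxMinor_weighted_mul, abs_of_nonneg (zero_le_one.trans hdet1), hdet, mul_comm, covolume]
  obtain ⟨c, hc0, hc⟩ := exists_int_norm_vecMul_le hκ0
    (maxMinor_weighted_ne_zero p t (vecMul_injective_iff.mp hinj))
  rw [← weighted_vecMul, hcov] at hc
  have hq0 : c ᵥ* (P * U) ≠ 0 := fun h => hc0 (hinj (h.trans (zero_vecMul _).symm))
  have hlin : ‖linForm y (c ᵥ* (P * U))‖ ≤ ((p : ℝ) ^ ∑ l, t l)⁻¹ := by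
    have hp := prime_pos p
    refine norm_linForm_vecMul_le p c (by positivity) fun i => ?_
    rw [mul_apply_eq_vecMul, linForm_vecMul]
    exact hP i
  set a := covolume p t y U
  have ha : 0 ≤ a := covolume_nonneg p t y U
  have hηa : η / m ≤ a ^ ((Fintype.card κ : ℝ)⁻¹) := by
    rw [div_le_iff₀' hm]
    refine ((H _ hq0 hlin).trans hc).trans ?_
    gcongr
  calc (η / m) ^ m ≤ (η / m) ^ Fintype.card κ := pow_le_pow_of_le_one (by positivity) hηm' hκ
    _ ≤ (a ^ ((Fintype.card κ : ℝ)⁻¹)) ^ Fintype.card κ := by gcongr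
    _ = a := Real.rpow_inv_natCast_pow ha hκ0.ne'

/-! ### Enlarging a rational subspace by a short vector -/

theorem one_le_abs_mul_padicNorm {N : ℤ} (hN : N ≠ 0) : 1 ≤ |(N : ℝ)| * ‖(N : ℚ_[p])‖ := by
  have hdvd : (p : ℝ) ^ padicValInt p N ≤ |(N : ℝ)| := by
    exact_mod_cast Int.le_of_dvd (abs_pos.mpr hN) ((dvd_abs _ _).mpr (padicValInt_dvd N))
  rwa [Padic.norm_eq_zpow_neg_valuation (Int.cast_ne_zero.mpr hN), Padic.valuation_intCast,
    _root_.zpow_neg, zpow_natCast, ← div_eq_mul_inv, one_le_div (pow_pos (prime_pos p) _)]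

theorem padicNorm_det_mul_norm_linForm_le [DecidableEq κ] (y : ι → ℚ_[p]) (A : Matrix κ κ ℤ)
    (V : Matrix κ ι ℤ) :
    ‖(A.det : ℚ_[p])‖ * ‖fun i => linForm y (V i)‖ ≤ ‖fun i => linForm y ((A * V) i)‖ := by
  have hadj : A.adjugate * (A * V) = A.det • V := by
    rw [← Matrix.mul_assoc, adjugate_mul, Matrix.smul_mul, Matrix.one_mul]
  rw [← norm_smul]
  refine (pi_norm_le_iff_of_nonneg (norm_nonneg _)).mpr fun i => ?_
  have hlin : (A.det : ℚ_[p]) * linForm y (V i) = linForm y (A.adjugate i ᵥ* (A * V)) := by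
    rw [← mul_apply_eq_vecMul, hadj]
    simp [linForm, Finset.mul_sum, mul_assoc]
  rw [Pi.smul_apply, smul_eq_mul, hlin]
  exact norm_linForm_vecMul_le p _ (norm_nonneg _)
    fun k => norm_le_pi_norm (fun i => linForm y ((A * V) i)) k

theorem covolume_le_covolume_mul [DecidableEq κ] (t : ι → ℕ) (y : ι → ℚ_[p]) {A : Matrix κ κ ℤ}
    (hA : A.det ≠ 0) (V : Matrix κ ι ℤ) : covolume p t y V ≤ covolume p t y (A * V) := by
  have hp := prime_pos p
  have hN1 : (1 : ℝ) ≤ |(A.det : ℝ)| := by exact_mod_cast Int.one_le_abs hA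
  have hnorm : ‖fun i => linForm y (V i)‖ ≤
      |(A.det : ℝ)| * ‖fun i => linForm y ((A * V) i)‖ :=
    calc _ ≤ |(A.det : ℝ)| * ‖(A.det : ℚ_[p])‖ * ‖fun i => linForm y (V i)‖ :=
          le_mul_of_one_le_left (norm_nonneg _) (one_le_abs_mul_padicNorm p hA)
      _ ≤ _ := by
          rw [mul_assoc]
          gcongr
          exact padicNorm_det_mul_norm_linForm_le p y A V
  rw [covolume, covolume, maxMinor_weighted_mul, mul_comm |_|, mul_assoc]
  refine mul_le_mul_of_nonneg_left ?_ (maxMinor_nonneg _)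
  rw [mul_max_of_nonneg _ _ (abs_nonneg _), mul_one, mul_left_comm]
  exact max_le_max hN1 (mul_le_mul_of_nonneg_left hnorm (by positivity))

theorem covolume_cons_le {j : ℕ} {t : ι → ℕ} {y : ι → ℚ_[p]} {w : ι → ℤ}
    (hw : ‖linForm y w‖ ≤ ((p : ℝ) ^ ∑ l, t l)⁻¹) (U : Matrix (Fin j) ι ℤ) :
    covolume p t y (of (Fin.cons w U : Fin (j + 1) → ι → ℤ)) ≤
      (j + 1) * ‖weighted p t w‖ * covolume p t y U := by
  have hp := pow_pos (prime_pos p) (∑ l, t l)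
  have hrows : (of fun i => weighted p t ((of (Fin.cons w U : Fin (j + 1) → ι → ℤ)) i)) =
      of (Fin.cons (weighted p t w) fun i => weighted p t (U i) : Fin (j + 1) → ι → ℝ) :=
    funext (Fin.cases rfl fun _ => rfl)
  have hfactor : max 1 ((p : ℝ) ^ (∑ l, t l) *
      ‖fun i => linForm y ((of (Fin.cons w U : Fin (j + 1) → ι → ℤ)) i)‖) ≤
      max 1 ((p : ℝ) ^ (∑ l, t l) * ‖fun i => linForm y (U i)‖) := by
    refine max_le (le_max_left _ _) ?_
    rw [← le_div_iff₀' hp]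
    refine (pi_norm_le_iff_of_nonneg (by positivity)).mpr (Fin.cases ?_ fun i => ?_)
    · refine hw.trans ?_
      rw [inv_eq_one_div]
      gcongr
      exact le_max_left _ _
    · rw [le_div_iff₀' hp]
      exact (mul_le_mul_of_nonneg_left (norm_le_pi_norm (fun i => linForm y (U i)) i) hp.le).trans
        (le_max_right _ _)
  rw [covolume, hrows]
  refine (mul_le_mul (maxMinor_cons_le _ _) hfactor (zero_le_one.trans (le_max_left _ _))
    (by have := maxMinor_nonneg (of fun i => weighted p t (U i)); positivity)).trans_eq ?_
  rw [covolume]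
  ring

end Covolume

theorem exists_isChain_insert_sup_span_singleton {R M : Type*} [Ring R] [AddCommGroup M]
    [Module R M] {G : Finset (Submodule R M)}
    (hG : IsChain (· ≤ ·) (G : Set (Submodule R M))) {v : M} (hv : v ≠ 0) :
    ∃ W ∈ insert ⊥ (G : Set (Submodule R M)), v ∉ W ∧
      IsChain (· ≤ ·) (insert (W ⊔ Submodule.span R {v}) (G : Set (Submodule R M))) := by
  obtain ⟨W, ⟨hW, hvW⟩, hmax⟩ :
      ∃ W, Maximal (fun W => W ∈ insert ⊥ (G : Set (Submodule R M)) ∧ v ∉ W) W :=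
    ((G.finite_toSet.insert ⊥).subset (Set.sep_subset _ (v ∉ ·))).exists_maximal
      ⟨⊥, Set.mem_insert _ _, mt (Submodule.mem_bot R).mp hv⟩
  refine ⟨W, hW, hvW, hG.insert fun Z hZ _ => ?_⟩
  have hcomp : Z ≤ W ∨ W ≤ Z := by
    rcases hW with rfl | hW
    · exact Or.inr bot_le
    · exact hG.total hZ hW
  by_cases hvZ : v ∈ Z
  · exact Or.inl (sup_le (hcomp.resolve_left fun h => hvW (h hvZ))
      ((Submodule.span_singleton_le_iff_mem _ _).mpr hvZ))
  · exact Or.inr (le_sup_of_le_left (hcomp.elim id fun h => hmax ⟨Or.inr hZ, hvZ⟩ h))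

section LatticeCovolume

variable {ι : Type*} [Fintype ι]

open Matrix

/-- The covolume attached to a rational subspace, i.e. that of its lattice of integral points. -/
noncomputable def latticeCovolume (t : ι → ℕ) (y : ι → ℚ_[p]) (W : Submodule ℚ (ι → ℚ)) : ℝ :=
  covolume p t y (integralBasis W)

variable {t : ι → ℕ} {y : ι → ℚ_[p]} {W : Submodule ℚ (ι → ℚ)}

theorem latticeCovolume_le {j : ℕ} (hj : j = Module.finrank ℚ W) {U : Matrix (Fin j) ι ℤ}
    (hU : LinearIndependent ℤ U.row) (hmem : ∀ i, U i ∈ integralPoints W) :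
    latticeCovolume p t y W ≤ covolume p t y U := by
  subst hj
  have hcoord (i) : ∃ c : Fin (Module.finrank ℚ W) → ℤ, c ᵥ* integralBasis W = U i := by
    obtain ⟨c, hc⟩ := (Submodule.mem_span_range_iff_exists_fun ℤ).mp
      ((span_range_integralBasis W).symm ▸ hmem i)
    exact ⟨c, (vecMul_eq_sum c _).trans hc⟩
  choose A hA using hcoord
  have hUA : of A * integralBasis W = U := funext hA
  have hdet : (of A).det ≠ 0 := fun h0 => by
    obtain ⟨v, hv0, hv⟩ := exists_vecMul_eq_zero_iff.mpr h0
    refine hv0 (vecMul_injective_iff.mpr hU ?_)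
    simp only [← hUA, ← vecMul_vecMul, hv, zero_vecMul]
  exact (covolume_le_covolume_mul p t y hdet _).trans_eq (congrArg _ hUA)

theorem latticeCovolume_sup_span_le {w : ι → ℤ} (hwW : intToRat ι w ∉ W)
    (hw : ‖linForm y w‖ ≤ ((p : ℝ) ^ ∑ l, t l)⁻¹) :
    latticeCovolume p t y (W ⊔ Submodule.span ℚ {intToRat ι w}) ≤
      (Module.finrank ℚ W + 1) * ‖weighted p t w‖ * latticeCovolume p t y W := by
  refine le_trans ?_ (covolume_cons_le p hw (integralBasis W))
  refine latticeCovolume_le p (finrank_sup_span_singleton hwW).symm ?_ (Fin.cases ?_ fun i => ?_)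
  · refine (linearIndependent_integralBasis W).finCons' _ _ fun c v hv h => ?_
    by_contra hc
    refine hwW (mem_of_zsmul_mem_integralPoints hc ?_)
    rw [eq_neg_of_add_eq_zero_left h, ← span_range_integralBasis W]
    exact neg_mem hv
  · exact Submodule.mem_sup_right (Submodule.mem_span_singleton_self _)
  · refine integralPoints_mono le_sup_left ?_
    rw [← span_range_integralBasis W]
    exact Submodule.subset_span (Set.mem_range_self i)

theorem latticeCovolume_bot_le_one : latticeCovolume p t y ⊥ ≤ 1 :=
  have : IsEmpty (Fin (Module.finrank ℚ (⊥ : Submodule ℚ (ι → ℚ)))) := by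
    rw [finrank_bot]; infer_instance
  covolume_le_one_of_isEmpty p t y _

theorem latticeCovolume_nonneg : 0 ≤ latticeCovolume p t y W := covolume_nonneg p t y _

variable {Y : ℚ_[p] → ι → ℚ_[p]} {ε ρ : ℝ} {x : ℚ_[p]}

/-- The subspace produced by `exists_isChain_insert_sup_span_singleton` from a short vector would
have too small a covolume for `x` to be marked. -/
theorem IsMarked.le_card_mul_norm_weighted
    (hx : IsMarked (fun W x => latticeCovolume p t (Y x) W) ε ρ ∅ x) (hερ : ε ≤ ρ) (hρ : ρ ≤ 1)
    {w : ι → ℤ} (hw0 : w ≠ 0) (hw : ‖linForm (Y x) w‖ ≤ ((p : ℝ) ^ ∑ l, t l)⁻¹) :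
    ε ≤ Fintype.card ι * ‖weighted p t w‖ := by
  obtain ⟨G, -, hG, hlt, hge⟩ := hx
  obtain ⟨W, hW, hwW, hchain⟩ := exists_isChain_insert_sup_span_singleton hG
    ((map_ne_zero_iff _ intToRat_injective).mpr hw0)
  have hW1 : latticeCovolume p t (Y x) W ≤ 1 := by
    rcases hW with rfl | hW
    · exact latticeCovolume_bot_le_one p
    · exact (hlt W hW (Finset.notMem_empty W)).2.le.trans hρ
  have hrank : (Module.finrank ℚ W + 1 : ℝ) ≤ Fintype.card ι := by
    have h := (W ⊔ Submodule.span ℚ {intToRat ι w}).finrank_le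
    rw [finrank_sup_span_singleton hwW, Module.finrank_fintype_fun_eq_card] at h
    exact_mod_cast h
  calc ε ≤ latticeCovolume p t (Y x) (W ⊔ Submodule.span ℚ {intToRat ι w}) := by
        by_cases hV : W ⊔ Submodule.span ℚ {intToRat ι w} ∈ G
        · exact (hlt _ hV (Finset.notMem_empty _)).1
        · exact hερ.trans (hge _ ⟨hV, hchain⟩)
    _ ≤ (Module.finrank ℚ W + 1) * ‖weighted p t w‖ * latticeCovolume p t (Y x) W :=
        latticeCovolume_sup_span_le p hwW hw
    _ ≤ Fintype.card ι * ‖weighted p t w‖ * 1 :=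
        mul_le_mul (mul_le_mul_of_nonneg_right hrank (norm_nonneg _)) hW1
          (latticeCovolume_nonneg p) (by positivity)
    _ = Fintype.card ι * ‖weighted p t w‖ := mul_one _

theorem continuous_linForm (q : ι → ℤ) : Continuous fun y : ι → ℚ_[p] => linForm y q := by
  unfold linForm
  fun_prop

theorem continuous_latticeCovolume (t : ι → ℕ) (W : Submodule ℚ (ι → ℚ)) :
    Continuous fun y : ι → ℚ_[p] => latticeCovolume p t y W := by
  have hlin (i) := continuous_linForm p (integralBasis W i)
  unfold latticeCovolume covolume
  fun_prop

theorem exists_latticeCovolume_lt (hY : ContinuousOn Y (closedBall 0 1))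
    (hx : x ∈ closedBall 0 1) (h : latticeCovolume p t (Y x) W < ρ) :
    ∃ k, ∀ x' ∈ closedBall x (radius p k), latticeCovolume p t (Y x') W < ρ := by
  have hcont : ContinuousAt Y x :=
    hY.continuousAt ((IsUltrametricDist.isOpen_closedBall 0 one_ne_zero).mem_nhds hx)
  obtain ⟨δ, hδ, hball⟩ := Metric.eventually_nhds_iff_ball.mp
    (((continuous_latticeCovolume p t W).continuousAt.comp hcont).eventually_lt_const h)
  obtain ⟨k, hk⟩ := exists_radius_lt p hδ
  exact ⟨k, fun x' hx' => hball x' (closedBall_subset_ball hk hx')⟩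

end LatticeCovolume

/-! ### Short vectors along power series -/

section PowerSeries

variable {p}

theorem norm_pow_sub_pow_le {x x' : ℚ_[p]} (hx : ‖x‖ ≤ 1) (hx' : ‖x'‖ ≤ 1) (n : ℕ) :
    ‖x ^ n - x' ^ n‖ ≤ ‖x - x'‖ := by
  rw [← (Commute.all x x').geom_sum₂_mul, norm_mul]
  refine mul_le_of_le_one_left (norm_nonneg _)
    (IsUltrametricDist.norm_sum_le_of_forall_le_of_nonneg zero_le_one fun i _ => ?_)
  rw [norm_mul, norm_pow, norm_pow]
  exact mul_le_one₀ (pow_le_one₀ (norm_nonneg _) hx) (by positivity)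
    (pow_le_one₀ (norm_nonneg _) hx')

variable {ι : Type*} [Fintype ι] {Y : ℚ_[p] → ι → ℚ_[p]} {c : ℕ → ι → ℚ_[p]}

omit [Fintype ι] in
theorem tendsto_zero_of_hasSum (hY : ∀ x, ‖x‖ ≤ 1 → HasSum (fun n => x ^ n • c n) (Y x)) :
    Tendsto c atTop (𝓝 0) := by
  simpa using (hY 1 norm_one.le).summable.tendsto_atTop_zero

theorem lipschitzOnWith_of_hasSum (hY : ∀ x, ‖x‖ ≤ 1 → HasSum (fun n => x ^ n • c n) (Y x)) :
    ∃ C, LipschitzOnWith C Y (closedBall 0 1) := by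
  obtain ⟨C, hC⟩ := (tendsto_zero_of_hasSum hY).norm.bddAbove_range
  have hcC (n) : ‖c n‖ ≤ C.toNNReal := (hC ⟨n, rfl⟩).trans (Real.le_coe_toNNReal C)
  refine ⟨C.toNNReal, LipschitzOnWith.of_dist_le_mul fun x hx x' hx' => ?_⟩
  rw [mem_closedBall_zero_iff] at hx hx'
  rw [dist_eq_norm, dist_eq_norm]
  refine le_of_tendsto ((hY x hx).sub (hY x' hx')).norm (Eventually.of_forall fun s => ?_)
  refine IsUltrametricDist.norm_sum_le_of_forall_le_of_nonneg (by positivity) fun n _ => ?_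
  rw [← sub_smul, norm_smul, mul_comm]
  exact mul_le_mul (hcC n) (norm_pow_sub_pow_le hx hx' n) (norm_nonneg _) (by positivity)

theorem exists_linForm_dominant_index (hc : Tendsto c atTop (𝓝 0)) :
    ∃ D ≠ 0, ∀ q : ι → ℤ, (∀ n, linForm (c n) q = 0) ∨
      ∃ N ≤ D, ∀ n, N < n → ‖linForm (c n) q‖ < ‖linForm (c N) q‖ := by
  let φ (n : ℕ) : (ι → ℚ_[p]) →L[ℚ_[p]] ℚ_[p] := ∑ l, c n l • ContinuousLinearMap.proj l
  have hφ (n : ℕ) (q : ι → ℤ) : φ n (fun l => q l) = linForm (c n) q := by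
    simp [φ, linForm, mul_comm]
  have hφ0 : Tendsto φ atTop (𝓝 0) := by
    rw [← Finset.sum_eq_zero (s := Finset.univ) fun l _ =>
      zero_smul ℚ_[p] (ContinuousLinearMap.proj l : (ι → ℚ_[p]) →L[ℚ_[p]] ℚ_[p])]
    exact tendsto_finsetSum _ fun l _ => (tendsto_pi_nhds.mp hc l).smul_const _
  obtain ⟨D, hD⟩ := exists_uniform_dominant_index hφ0
  refine ⟨D + 1, D.succ_ne_zero, fun q => ?_⟩
  simp only [← hφ]
  exact (hD _).imp_right fun ⟨N, hN, h⟩ => ⟨N, hN.trans D.le_succ, h⟩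

theorem hasSum_linForm (hY : ∀ x, ‖x‖ ≤ 1 → HasSum (fun n => x ^ n • c n) (Y x)) (q : ι → ℤ)
    {x : ℚ_[p]} (hx : ‖x‖ ≤ 1) :
    HasSum (fun n => linForm (c n) q * x ^ n) (linForm (Y x) q) := by
  have h := hasSum_sum (s := Finset.univ) fun l _ =>
    (Pi.hasSum.mp (hY x hx) l).mul_left (q l : ℚ_[p])
  refine h.congr_fun fun n => ?_
  simp only [linForm, Finset.sum_mul, Pi.smul_apply, smul_eq_mul]
  exact Finset.sum_congr rfl fun l _ => by ring

variable (p) in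
theorem exists_padicHaar_linForm_lt_le
    (hY : ∀ x, ‖x‖ ≤ 1 → HasSum (fun n => x ^ n • c n) (Y x)) :
    ∃ D : ℕ, D ≠ 0 ∧ ∀ (q : ι → ℤ) {z : ℚ_[p]}, ‖z‖ ≤ 1 → ∀ (k : ℕ) {ε ρ : ℝ}, 0 < ε → ε ≤ ρ →
      ρ ≤ ‖linForm (Y z) q‖ →
      padicHaar p {x ∈ closedBall z (radius p k) | ‖linForm (Y x) q‖ < ε} ≤
        ENNReal.ofReal ((D + 1) * (ε / ρ) ^ (D : ℝ)⁻¹ * radius p k) := by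
  obtain ⟨D, hD0, hD⟩ := exists_linForm_dominant_index (tendsto_zero_of_hasSum hY)
  refine ⟨D, hD0, fun q z hz k ε ρ hε hερ hρ => ?_⟩
  rcases hD q with h0 | ⟨N, hN, hdom⟩
  · have hzero : linForm (Y z) q = 0 := by
      have hsum := hasSum_linForm hY q hz
      simp only [h0, zero_mul] at hsum
      exact hsum.unique hasSum_zero
    rw [hzero, norm_zero] at hρ
    exact absurd (hε.trans_le hερ) hρ.not_gt
  · exact padicHaar_norm_lt_le hD0 hN (fun x hx => hasSum_linForm hY q hx) hdom hz k hε hερ hρ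

theorem maxMinor_mul_norm_linForm_le_covolume {κ : Type*} [Fintype κ] [DecidableEq κ] (t : ι → ℕ)
    (y : ι → ℚ_[p]) (U : Matrix κ ι ℤ) (i : κ) :
    maxMinor (Matrix.of fun i => weighted p t (U i)) * p ^ (∑ l, t l) * ‖linForm y (U i)‖ ≤
      covolume p t y U := by
  rw [covolume, mul_assoc]
  refine mul_le_mul_of_nonneg_left (le_max_of_le_right ?_) (maxMinor_nonneg _)
  gcongr
  exact norm_le_pi_norm (fun i => linForm y (U i)) i

theorem exists_le_maxMinor_mul_norm_linForm {κ : Type*} [Fintype κ] [DecidableEq κ] {t : ι → ℕ}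
    {y : ι → ℚ_[p]} {U : Matrix κ ι ℤ} {ρ : ℝ} (hρ : 0 < ρ)
    (hA : maxMinor (Matrix.of fun i => weighted p t (U i)) < ρ) (h : ρ ≤ covolume p t y U) :
    ∃ i, ρ ≤ maxMinor (Matrix.of fun i => weighted p t (U i)) * p ^ (∑ l, t l) *
      ‖linForm y (U i)‖ := by
  rw [covolume, mul_max_of_nonneg _ _ (maxMinor_nonneg _), mul_one, le_max_iff,
    or_iff_right hA.not_ge, ← mul_assoc] at h
  have : Nonempty κ := not_isEmpty_iff.mp fun _ => by
    rw [norm_of_subsingleton, mul_zero] at h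
    exact hρ.not_ge h
  obtain ⟨i, hi⟩ := exists_norm_eq_norm_apply fun i => linForm y (U i)
  exact ⟨i, hi ▸ h⟩

variable (p) in
theorem exists_padicHaar_covolume_lt_le
    (hY : ∀ x, ‖x‖ ≤ 1 → HasSum (fun n => x ^ n • c n) (Y x)) :
    ∃ D : ℕ, D ≠ 0 ∧ ∀ (t : ι → ℕ) {j : ℕ} (U : Matrix (Fin j) ι ℤ)
      {z : ℚ_[p]}, ‖z‖ ≤ 1 → ∀ (k : ℕ) {ε ρ : ℝ}, 0 < ε → ε ≤ ρ → ρ ≤ covolume p t (Y z) U →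
      padicHaar p {x ∈ closedBall z (radius p k) | covolume p t (Y x) U < ε} ≤
        ENNReal.ofReal ((D + 1) * (ε / ρ) ^ (D : ℝ)⁻¹ * radius p k) := by
  obtain ⟨D, hD0, hD⟩ := exists_padicHaar_linForm_lt_le p hY
  refine ⟨D, hD0, fun t j U z hz k ε ρ hε hερ hρ => ?_⟩
  set A := maxMinor (Matrix.of fun i => weighted p t (U i)) with hA
  rcases le_or_gt ε A with hεA | hAε
  · have hempty : {x ∈ closedBall z (radius p k) | covolume p t (Y x) U < ε} = ∅ :=
      Set.sep_eq_empty_iff_mem_false.mpr fun x _ => not_lt.mpr <|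
        hεA.trans (le_mul_of_one_le_right (maxMinor_nonneg _) (le_max_left _ _))
    rw [hempty, measure_empty]
    exact zero_le
  obtain ⟨i, hi⟩ := exists_le_maxMinor_mul_norm_linForm (hε.trans_le hερ) (hAε.trans_le hερ) hρ
  have hpos : 0 < A * p ^ ∑ l, t l := by
    refine lt_of_le_of_ne (mul_nonneg (maxMinor_nonneg _) (by positivity)) fun h0 => ?_
    rw [← hA, ← h0, zero_mul] at hi
    exact (hε.trans_le hερ).not_ge hi
  have hgood := hD (U i) hz k (div_pos hε hpos) (div_le_div_of_nonneg_right hερ hpos.le)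
    ((div_le_iff₀' hpos).mpr hi)
  rw [div_div_div_cancel_right₀ hpos.ne'] at hgood
  refine le_trans (measure_mono ?_) hgood
  exact fun x ⟨hx, hlt⟩ => ⟨hx, (lt_div_iff₀' hpos).mpr
    ((maxMinor_mul_norm_linForm_le_covolume t (Y x) U i).trans_lt hlt)⟩

variable (p) in
theorem exists_padicHaar_not_isMarked_le
    (hY : ∀ x, ‖x‖ ≤ 1 → HasSum (fun n => x ^ n • c n) (Y x)) :
    ∃ D : ℕ, D ≠ 0 ∧ ∀ (t : ι → ℕ) {z : ℚ_[p]}, ‖z‖ ≤ 1 → ∀ {ε ρ : ℝ}, 0 < ε → ε ≤ ρ →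
      (∀ W, ρ ≤ latticeCovolume p t (Y z) W) →
      padicHaar p {x ∈ closedBall 0 1 |
          ¬ IsMarked (fun W x => latticeCovolume p t (Y x) W) ε ρ ∅ x} ≤
        markingConst p (Fintype.card ι + 1) * ENNReal.ofReal ((D + 1) * (ε / ρ) ^ (D : ℝ)⁻¹) := by
  obtain ⟨D, hD0, hD⟩ := exists_padicHaar_covolume_lt_le p hY
  obtain ⟨C, hC⟩ := lipschitzOnWith_of_hasSum hY
  refine ⟨D, hD0, fun t z hz ε ρ hε hερ hρ => ?_⟩
  have hρ0 : 0 < ρ := hε.trans_le hερ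
  have hdoubling (x : ℚ_[p]) (k : ℕ) : padicHaar p (closedBall x (radius p k)) ≤
      p * padicHaar p (closedBall x (radius p (k + 1))) := by
    rw [padicHaar_closedBall, padicHaar_closedBall, radius_eq_mul_radius_succ,
      ENNReal.ofReal_mul p.cast_nonneg, ENNReal.ofReal_natCast]
  have hgood (W : Submodule ℚ (ι → ℚ)) (a : ℚ_[p]) (ha : a ∈ closedBall 0 (radius p 0)) (k : ℕ)
      (hex : ∃ x ∈ closedBall a (radius p k), ρ ≤ latticeCovolume p t (Y x) W) :
      padicHaar p {x ∈ closedBall a (radius p k) | latticeCovolume p t (Y x) W < ε} ≤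
        ENNReal.ofReal ((D + 1) * (ε / ρ) ^ (D : ℝ)⁻¹) *
          padicHaar p (closedBall a (radius p k)) := by
    obtain ⟨x, hx, hxρ⟩ := hex
    rw [radius_zero] at ha
    have hx1 : x ∈ closedBall (0 : ℚ_[p]) 1 :=
      IsUltrametricDist.closedBall_eq_of_mem ha ▸
        closedBall_subset_closedBall (radius_le_one p k) hx
    rw [padicHaar_closedBall, ← ENNReal.ofReal_mul (by positivity),
      IsUltrametricDist.closedBall_eq_of_mem hx]
    exact hD t _ (mem_closedBall_zero_iff.mp hx1) k hε hερ hxρ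
  have key := measure_not_isMarked_le (radius_anti p) (radius_pos p) hdoubling
    (fun _ hG => by simpa using card_le_finrank_add_one_of_isChain hG) hgood
    (fun W x hx h => exists_latticeCovolume_lt p hC.continuousOn (radius_zero p ▸ hx) h)
    (k := 0) (m := Fintype.card ι + 1) (F := ∅) (by simp) (by simp)
    (mem_closedBall_self (radius_pos p 0).le) fun W _ => ⟨z, by simpa [radius_zero] using hz, hρ W⟩
  rwa [radius_zero, padicHaar_closedBall_one, mul_one] at key

variable (p) in
theorem exists_padicHaar_norm_weighted_lt_le
    (hY : ∀ x, ‖x‖ ≤ 1 → HasSum (fun n => x ^ n • c n) (Y x)) :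
    ∃ (C : ℝ) (D : ℕ), D ≠ 0 ∧ ∀ (t : ι → ℕ) {z : ℚ_[p]}, ‖z‖ ≤ 1 → ∀ {η ε : ℝ}, 0 < η →
      η ≤ Fintype.card ι → 0 < ε → ε ≤ (η / Fintype.card ι) ^ Fintype.card ι →
      (∀ q : ι → ℤ, q ≠ 0 → ‖linForm (Y z) q‖ ≤ ((p : ℝ) ^ ∑ l, t l)⁻¹ → η ≤ ‖weighted p t q‖) →
      padicHaar p {x ∈ closedBall 0 1 | ∃ q : ι → ℤ, q ≠ 0 ∧
          ‖linForm (Y x) q‖ ≤ ((p : ℝ) ^ ∑ l, t l)⁻¹ ∧ Fintype.card ι * ‖weighted p t q‖ < ε} ≤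
        ENNReal.ofReal (C * (ε / (η / Fintype.card ι) ^ Fintype.card ι) ^ (D : ℝ)⁻¹) := by
  obtain ⟨D, hD0, hD⟩ := exists_padicHaar_not_isMarked_le p hY
  set K := markingConst (p : ℝ≥0∞) (Fintype.card ι + 1)
  have hK : ENNReal.ofReal K.toReal = K :=
    ENNReal.ofReal_toReal (markingConst_ne_top (ENNReal.natCast_ne_top p) _)
  refine ⟨K.toReal * (D + 1), D, hD0, fun t z hz η ε hη hηm hε hερ H => ?_⟩
  have hcard : (0 : ℝ) < Fintype.card ι := hη.trans_le hηm
  have hρ1 : (η / Fintype.card ι) ^ Fintype.card ι ≤ 1 :=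
    pow_le_one₀ (by positivity) ((div_le_one hcard).mpr hηm)
  have hlarge (W : Submodule ℚ (ι → ℚ)) :
      (η / Fintype.card ι) ^ Fintype.card ι ≤ latticeCovolume p t (Y z) W := by
    refine pow_le_covolume p ?_ (linearIndependent_integralBasis W) hη hηm H
    rw [Fintype.card_fin, ← Module.finrank_fintype_fun_eq_card ℚ]
    exact W.finrank_le
  rw [mul_assoc, ENNReal.ofReal_mul ENNReal.toReal_nonneg, hK]
  refine (measure_mono ?_).trans (hD t hz hε hερ hlarge)
  rintro x ⟨hx, q, hq0, hq, hlt⟩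
  exact ⟨hx, fun hmarked => hlt.not_ge (hmarked.le_card_mul_norm_weighted p hερ hρ1 hq0 hq)⟩

end PowerSeries

/-! ### Multiplicative approximation and short vectors -/

section ShortVectors

variable {ι : Type*} [Fintype ι]

/-- The multiplicative height `Π₊` of an integer vector. -/
noncomputable def heightProd (q : ι → ℤ) : ℝ := ∏ i, max |(q i : ℝ)| 1

theorem one_le_heightProd (q : ι → ℤ) : 1 ≤ heightProd q :=
  Finset.one_le_prod fun _ _ => le_max_right _ _

theorem heightProd_pos (q : ι → ℤ) : 0 < heightProd q :=
  zero_lt_one.trans_le (one_le_heightProd q)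

theorem abs_le_heightProd (q : ι → ℤ) (i : ι) : |(q i : ℝ)| ≤ heightProd q :=
  Finset.le_prod_max_one (Finset.mem_univ i) fun i => |(q i : ℝ)|

theorem finite_setOf_heightProd_le (B : ℝ) : {q : ι → ℤ | heightProd q ≤ B}.Finite := by
  classical
  refine (Set.finite_Icc (fun _ : ι => -⌈B⌉) fun _ => ⌈B⌉).subset fun q hq => ?_
  have h (i) : |q i| ≤ ⌈B⌉ := by
    exact_mod_cast ((abs_le_heightProd q i).trans hq).trans (Int.le_ceil B)
  exact ⟨fun i => (abs_le.mp (h i)).1, fun i => (abs_le.mp (h i)).2⟩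

theorem finite_setOf_sum_le (B : ℕ) : {t : ι → ℕ | ∑ i, t i ≤ B}.Finite := by
  classical
  exact (Set.finite_Iic fun _ : ι => B).subset fun _ ht i =>
    (Finset.single_le_sum (fun _ _ => Nat.zero_le _) (Finset.mem_univ i)).trans ht

theorem norm_weighted_le_iff {t : ι → ℕ} {q : ι → ℤ} {r : ℝ} (hr : 0 ≤ r) :
    ‖weighted p t q‖ ≤ r ↔ ∀ i, |(q i : ℝ)| ≤ r * (p : ℝ) ^ t i := by
  rw [pi_norm_le_iff_of_nonneg hr]
  refine forall_congr' fun i => ?_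
  have hpos := pow_pos (prime_pos p) (t i)
  rw [weighted, Real.norm_eq_abs, abs_mul, abs_inv, abs_of_pos hpos, ← div_eq_mul_inv,
    div_le_iff₀ hpos]

variable {p}

/-- The integer vectors witnessing multiplicative approximability of `y` with exponent `1 + ε`. -/
def approxSet (y : ι → ℚ_[p]) (ε : ℝ) : Set (ι → ℤ) :=
  {q | ‖linForm y q‖ ≤ heightProd q ^ (-(1 + ε))}

/-- The lattice attached to `y`, moved by the diagonal flow with parameters `t`, has a nonzero
vector of size at most `p^{-γ ∑ t_l}`. -/
def HasShortVector (y : ι → ℚ_[p]) (γ : ℝ) (t : ι → ℕ) : Prop :=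
  ∃ q : ι → ℤ, q ≠ 0 ∧ ‖linForm y q‖ ≤ ((p : ℝ) ^ ∑ l, t l)⁻¹ ∧
    ‖weighted p t q‖ ≤ ((p : ℝ) ^ ∑ l, t l) ^ (-γ)

variable {y : ι → ℚ_[p]} {ε γ : ℝ} {q : ι → ℤ} {t : ι → ℕ}

variable (p) in
/-- The exponents `t i` are chosen least with `p ^ t i` above `s * max 1 |q i|`. -/
theorem exists_pow_near_heightProd (q : ι → ℤ) {s : ℝ} (hs : 1 ≤ s) :
    ∃ t : ι → ℕ, (∀ i, s * |(q i : ℝ)| ≤ (p : ℝ) ^ t i) ∧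
      heightProd q ≤ (p : ℝ) ^ ∑ l, t l ∧
      (p : ℝ) ^ ∑ l, t l ≤ (p * s) ^ Fintype.card ι * heightProd q := by
  have hp := one_lt_prime p
  have hs0 := zero_lt_one.trans_le hs
  have hone (i) : 1 ≤ s * max |(q i : ℝ)| 1 := one_le_mul_of_one_le_of_one_le hs (le_max_right _ _)
  choose k hk hk' using fun i => exists_nat_pow_near (hone i) hp
  refine ⟨fun i => k i + 1, fun i => ?_, ?_, ?_⟩
  · exact (mul_le_mul_of_nonneg_left (le_max_left _ _) hs0.le).trans (hk' i).le
  · rw [heightProd, ← Finset.prod_pow_eq_pow_sum]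
    refine Finset.prod_le_prod (fun i _ => by positivity) fun i _ => ?_
    exact (le_mul_of_one_le_left (by positivity) hs).trans (hk' i).le
  · rw [heightProd, ← Finset.prod_pow_eq_pow_sum, ← Finset.card_univ, ← Finset.prod_const,
      ← Finset.prod_mul_distrib]
    refine Finset.prod_le_prod (fun i _ => by positivity) fun i _ => ?_
    rw [pow_succ', mul_assoc]
    exact mul_le_mul_of_nonneg_left (hk i) (prime_pos p).le

/-- With `s = heightProd q ^ δ`, the bound `(p * s) ^ card ι ≤ heightProd q ^ ε` makes
`p ^ ∑ t` comparable to `heightProd q` up to the exponent `1 + ε`. -/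
theorem exists_hasShortVector_of_mem_approxSet (hq : q ∈ approxSet y ε) (hq0 : q ≠ 0) {δ : ℝ}
    (hδ : 0 ≤ δ) (hp : (p * heightProd q ^ δ) ^ Fintype.card ι ≤ heightProd q ^ ε)
    (hγ : 0 ≤ γ) (hγδ : (1 + ε) * γ ≤ δ) :
    ∃ t : ι → ℕ, heightProd q ≤ (p : ℝ) ^ ∑ l, t l ∧ HasShortVector y γ t := by
  have hH := heightProd_pos q
  have hT (t : ι → ℕ) : (0 : ℝ) < (p : ℝ) ^ ∑ l, t l := pow_pos (prime_pos p) _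
  obtain ⟨t, ht, hle, hge⟩ :=
    exists_pow_near_heightProd p q (Real.one_le_rpow (one_le_heightProd q) hδ)
  have hupper : (p : ℝ) ^ ∑ l, t l ≤ heightProd q ^ (1 + ε) := by
    rw [add_comm, Real.rpow_add_one hH.ne']
    exact hge.trans (mul_le_mul_of_nonneg_right hp hH.le)
  refine ⟨t, hle, q, hq0, ?_, (norm_weighted_le_iff p (by positivity)).mpr fun i => ?_⟩
  · refine le_trans hq ?_
    rw [Real.rpow_neg hH.le]
    exact inv_anti₀ (hT t) hupper
  · have hγT : ((p : ℝ) ^ ∑ l, t l) ^ γ ≤ heightProd q ^ δ := by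
      calc ((p : ℝ) ^ ∑ l, t l) ^ γ ≤ (heightProd q ^ (1 + ε)) ^ γ :=
            Real.rpow_le_rpow (hT t).le hupper hγ
        _ = heightProd q ^ ((1 + ε) * γ) := (Real.rpow_mul hH.le _ _).symm
        _ ≤ heightProd q ^ δ := Real.rpow_le_rpow_of_exponent_le (one_le_heightProd q) hγδ
    rw [Real.rpow_neg (hT t).le, inv_mul_eq_div, le_div_iff₀ (Real.rpow_pos_of_pos (hT t) _),
      mul_comm]
    exact (mul_le_mul_of_nonneg_right hγT (abs_nonneg _)).trans (ht i)

theorem exists_infinite_hasShortVector (hε : 0 < ε) (h : (approxSet y ε).Infinite) :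
    ∃ k : ℕ, {t | HasShortVector y (1 / (k + 1)) t}.Infinite := by
  set m := Fintype.card ι
  set δ : ℝ := ε / (2 * (m + 1)) with hδ
  have hδ0 : 0 < δ := by positivity
  obtain ⟨k, hk⟩ := exists_nat_one_div_lt (show 0 < δ / (1 + ε) by positivity)
  rw [lt_div_iff₀' (by positivity)] at hk
  refine ⟨k, fun hfin => ?_⟩
  obtain ⟨B, hB⟩ := (hfin.image fun t => (p : ℝ) ^ ∑ l, t l).bddAbove
  refine h ((finite_setOf_heightProd_le (max B (max 1 (p ^ (1 / δ))))).subset fun q hq => ?_)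
  by_contra! hlarge
  simp only [Set.mem_ofPred_eq, not_le, max_lt_iff] at hlarge
  obtain ⟨hlB, hl1, hlp⟩ := hlarge
  have hH := heightProd_pos q
  have hq0 : q ≠ 0 := by
    rintro rfl
    simp [heightProd] at hl1
  have hpδ : (p : ℝ) ≤ heightProd q ^ δ := by
    rw [← Real.rpow_inv_le_iff_of_pos (prime_pos p).le hH.le hδ0, ← one_div]
    exact hlp.le
  have hpow : (p * heightProd q ^ δ) ^ m ≤ heightProd q ^ ε := by
    calc (p * heightProd q ^ δ) ^ m ≤ (heightProd q ^ δ * heightProd q ^ δ) ^ m := by gcongr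
      _ = heightProd q ^ ((δ + δ) * m) := by
        rw [← Real.rpow_add hH, ← Real.rpow_natCast, ← Real.rpow_mul hH.le]
      _ ≤ heightProd q ^ ε := Real.rpow_le_rpow_of_exponent_le hl1.le (by
        rw [hδ, ← two_mul, ← mul_div_assoc, mul_div_mul_left _ _ two_ne_zero, div_mul_eq_mul_div,
          div_le_iff₀ (by positivity)]
        nlinarith)
  obtain ⟨t, hle, ht⟩ :=
    exists_hasShortVector_of_mem_approxSet hq hq0 hδ0.le hpow (by positivity) hk.le
  exact (hle.trans (hB ⟨t, ht, rfl⟩)).not_gt hlB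

theorem heightProd_le_of_norm_weighted_le (hγ : 0 ≤ γ) (hq0 : q ≠ 0)
    (hq : ‖weighted p t q‖ ≤ ((p : ℝ) ^ ∑ l, t l) ^ (-γ)) :
    heightProd q ≤ ((p : ℝ) ^ ∑ l, t l) ^ (1 - γ) := by
  classical
  have hp := (one_lt_prime p).le
  have hT : (1 : ℝ) ≤ (p : ℝ) ^ ∑ l, t l := one_le_pow₀ hp
  rw [norm_weighted_le_iff p (by positivity)] at hq
  obtain ⟨i, hi⟩ := Function.ne_iff.mp hq0
  have hmax (j) : max |(q j : ℝ)| 1 ≤ (p : ℝ) ^ t j :=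
    max_le ((hq j).trans (mul_le_of_le_one_left (by positivity)
      (Real.rpow_le_one_of_one_le_of_nonpos hT (neg_nonpos.mpr hγ)))) (one_le_pow₀ hp)
  have hmaxi : max |(q i : ℝ)| 1 ≤ ((p : ℝ) ^ ∑ l, t l) ^ (-γ) * (p : ℝ) ^ t i := by
    rw [max_eq_left (by exact_mod_cast Int.one_le_abs hi)]
    exact hq i
  rw [sub_eq_neg_add, Real.rpow_add_one (by positivity), heightProd,
    ← Finset.prod_pow_eq_pow_sum, ← Finset.mul_prod_erase _ _ (Finset.mem_univ i),
    ← Finset.mul_prod_erase _ (fun j => (p : ℝ) ^ t j) (Finset.mem_univ i), ← mul_assoc,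
    Finset.mul_prod_erase _ (fun j => (p : ℝ) ^ t j) (Finset.mem_univ i),
    Finset.prod_pow_eq_pow_sum]
  exact mul_le_mul hmaxi (Finset.prod_le_prod (fun j _ => by positivity) fun j _ => hmax j)
    (Finset.prod_nonneg fun j _ => by positivity) (by positivity)

theorem mem_approxSet_of_norm_weighted_le (hγ : 0 ≤ γ) (hq0 : q ≠ 0)
    (hlin : ‖linForm y q‖ ≤ ((p : ℝ) ^ ∑ l, t l)⁻¹)
    (hq : ‖weighted p t q‖ ≤ ((p : ℝ) ^ ∑ l, t l) ^ (-γ)) : q ∈ approxSet y γ := by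
  have hH := heightProd_pos q
  have hT : (1 : ℝ) ≤ (p : ℝ) ^ ∑ l, t l := one_le_pow₀ (one_lt_prime p).le
  refine hlin.trans ?_
  rw [Real.rpow_neg hH.le]
  refine inv_anti₀ (Real.rpow_pos_of_pos hH _) ?_
  calc heightProd q ^ (1 + γ) ≤ (((p : ℝ) ^ ∑ l, t l) ^ (1 - γ)) ^ (1 + γ) :=
        Real.rpow_le_rpow hH.le (heightProd_le_of_norm_weighted_le hγ hq0 hq) (by positivity)
    _ = ((p : ℝ) ^ ∑ l, t l) ^ ((1 - γ) * (1 + γ)) := (Real.rpow_mul (by positivity) _ _).symm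
    _ ≤ ((p : ℝ) ^ ∑ l, t l) ^ (1 : ℝ) := Real.rpow_le_rpow_of_exponent_le hT (by nlinarith)
    _ = (p : ℝ) ^ ∑ l, t l := Real.rpow_one _

theorem linForm_ne_zero_of_finite_approxSet (h : (approxSet y γ).Finite) (hq0 : q ≠ 0) :
    linForm y q ≠ 0 := fun hzero => by
  refine Set.infinite_range_of_injective (smul_left_injective ℤ hq0) (h.subset ?_)
  rintro _ ⟨k, rfl⟩
  have hk : linForm y (k • q) = k * linForm y q := by
    simp only [linForm, Pi.smul_apply, smul_eq_mul, Int.cast_mul, Finset.mul_sum, mul_assoc]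
  simp only [approxSet, Set.mem_ofPred_eq, hk, hzero, mul_zero, norm_zero]
  exact Real.rpow_nonneg (heightProd_pos _).le _

theorem finite_setOf_hasShortVector (hγ : 0 ≤ γ) (h : (approxSet y γ).Finite) :
    {t | HasShortVector y γ t}.Finite := by
  obtain ⟨B, hB⟩ := (h.image fun q => ‖linForm y q‖⁻¹).bddAbove
  refine (finite_setOf_sum_le ⌊B⌋₊).subset ?_
  rintro t ⟨q, hq0, hlin, hq⟩
  have hpos := norm_pos_iff.mpr (linForm_ne_zero_of_finite_approxSet h hq0)
  have hpow : (p : ℝ) ^ ∑ l, t l ≤ B :=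
    ((le_inv_comm₀ (pow_pos (prime_pos p) _) hpos).mpr hlin).trans
      (hB ⟨q, mem_approxSet_of_norm_weighted_le hγ hq0 hlin hq, rfl⟩)
  refine Nat.le_floor (le_trans ?_ hpow)
  exact_mod_cast (Nat.lt_pow_self (by exact_mod_cast one_lt_prime p)).le

end ShortVectors

section Homogenize

variable {p} {n : ℕ}

/-- The point `(1, y)`, turning the affine form `q₀ + q · y` into a linear one. -/
noncomputable def homogenize (y : Fin n → ℚ_[p]) : Fin (n + 1) → ℚ_[p] := Fin.cons 1 y

theorem heightProd_cons (q₀ : ℤ) (q : Fin n → ℤ) :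
    heightProd (Fin.cons q₀ q : Fin (n + 1) → ℤ) = piPlusZ q₀ q := by
  have hmax (z : ℤ) : max |(z : ℝ)| 1 = if z = 0 then 1 else |(z : ℝ)| := by
    split_ifs with hz
    · simp [hz]
    · exact max_eq_left (by exact_mod_cast Int.one_le_abs hz)
  simp only [heightProd, piPlusZ, hmax, Fin.prod_univ_succ, Fin.cons_zero, Fin.cons_succ]

theorem linForm_homogenize_cons (y : Fin n → ℚ_[p]) (q₀ : ℤ) (q : Fin n → ℤ) :
    linForm (homogenize y) (Fin.cons q₀ q) = q₀ + ∑ i, (q i : ℚ_[p]) * y i := by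
  simp only [linForm, homogenize, Fin.sum_univ_succ, Fin.cons_zero, Fin.cons_succ, mul_one]

theorem isVWMA_iff_infinite_approxSet {y : Fin n → ℚ_[p]} :
    IsVWMA p y ↔ ∃ ε > 0, (approxSet (homogenize y) ε).Infinite := by
  refine exists_congr fun ε => and_congr_right fun _ => ?_
  have hcons : {qq : ℤ × (Fin n → ℤ) |
      ‖(qq.1 : ℚ_[p]) + ∑ i, (qq.2 i : ℚ_[p]) * y i‖ ≤ piPlusZ qq.1 qq.2 ^ (-(1 + ε))} =
      (Fin.consEquiv fun _ => ℤ) ⁻¹' approxSet (homogenize y) ε := by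
    ext ⟨q₀, q⟩
    simp only [approxSet, Fin.consEquiv, Equiv.coe_fn_mk, Set.mem_preimage, Set.mem_ofPred_eq,
      linForm_homogenize_cons, heightProd_cons]
  rw [hcons, ← Equiv.image_symm_eq_preimage,
    Set.infinite_image_iff (Fin.consEquiv fun _ => ℤ).symm.injective.injOn]

theorem isVWMA_iff_infinite_hasShortVector {y : Fin n → ℚ_[p]} :
    IsVWMA p y ↔ ∃ k : ℕ, {t | HasShortVector (homogenize y) (1 / (k + 1)) t}.Infinite := by
  rw [isVWMA_iff_infinite_approxSet]
  refine ⟨fun ⟨ε, hε, h⟩ => exists_infinite_hasShortVector hε h, fun ⟨k, hk⟩ => ?_⟩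
  exact ⟨1 / (k + 1), by positivity, fun h => hk (finite_setOf_hasShortVector (by positivity) h)⟩

end Homogenize

/-! ### Borel–Cantelli -/

theorem tsum_fin_prod_eq_pow {α : Type*} (f : α → ℝ≥0∞) (m : ℕ) :
    ∑' t : Fin m → α, ∏ i, f (t i) = (∑' a, f a) ^ m := by
  induction m with
  | zero => simp
  | succ m ih =>
    rw [← (Fin.consEquiv fun _ : Fin (m + 1) => α).tsum_eq]
    simp only [Fin.consEquiv, Equiv.coe_fn_mk, Fin.prod_univ_succ, Fin.cons_zero, Fin.cons_succ]
    rw [ENNReal.tsum_prod (f := fun a (t : Fin m → α) => f a * ∏ i, f (t i))]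
    simp only [ENNReal.tsum_mul_left, ENNReal.tsum_mul_right, ih]
    rw [pow_succ']

theorem tsum_prod_eq_pow {ι α : Type*} [Fintype ι] (f : α → ℝ≥0∞) :
    ∑' t : ι → α, ∏ i, f (t i) = (∑' a, f a) ^ Fintype.card ι := by
  rw [← tsum_fin_prod_eq_pow, ← ((Fintype.equivFin ι).symm.arrowCongr (Equiv.refl α)).tsum_eq]
  refine tsum_congr fun t => ?_
  exact (Fintype.equivFin ι).prod_comp fun i => f (t i)

theorem tsum_ofReal_mul_pow_sum_ne_top {ι : Type*} [Fintype ι] {K r : ℝ} (hK : 0 ≤ K)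
    (hr : 0 ≤ r) (hr1 : r < 1) : ∑' t : ι → ℕ, ENNReal.ofReal (K * r ^ ∑ l, t l) ≠ ∞ := by
  simp only [ENNReal.ofReal_mul hK, ENNReal.ofReal_pow hr]
  simp only [← Finset.prod_pow_eq_pow_sum, ENNReal.tsum_mul_left]
  rw [tsum_prod_eq_pow fun a => ENNReal.ofReal r ^ a, ENNReal.tsum_geometric]
  refine ENNReal.mul_ne_top ENNReal.ofReal_ne_top (ENNReal.pow_ne_top (ENNReal.inv_ne_top.mpr ?_))
  simpa [tsub_eq_zero_iff_le] using hr1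

section PowerSeries

variable {p} {ι : Type*} [Fintype ι] {Y : ℚ_[p] → ι → ℚ_[p]} {c : ℕ → ι → ℚ_[p]} {γ : ℝ}

theorem two_mul_rpow_neg_div_eq {X : ℝ} (hX : 0 < X) {m : ℕ} (hm : m ≠ 0) (γ : ℝ) :
    2 * m * X ^ (-γ) / (X ^ (-(γ / (2 * m))) / m) ^ m = 2 * m * m ^ m * X ^ (-(γ / 2)) := by
  have hpow : (X ^ (-(γ / (2 * m)))) ^ m = X ^ (-(γ / 2)) := by
    rw [← Real.rpow_natCast, ← Real.rpow_mul hX.le]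
    congr 1
    field_simp
  have hsplit : X ^ (-γ) = X ^ (-(γ / 2)) * X ^ (-(γ / 2)) := by
    rw [← Real.rpow_add hX]
    ring_nf
  have hne := (Real.rpow_pos_of_pos hX (-(γ / 2))).ne'
  rw [div_pow, hpow, hsplit]
  field_simp

/-- Take `η = p^{-γ T / 2m}` and `ε = 2 m p^{-γ T}`, where `T = ∑ t_l` and `m` is the number of
coordinates, so that the ratio `ε / (η / m) ^ m` decays like `p^{-γ T / 2}`. -/
theorem exists_padicHaar_hasShortVector_le_rpow [Nonempty ι]
    (hY : ∀ x, ‖x‖ ≤ 1 → HasSum (fun n => x ^ n • c n) (Y x)) (hγ : 0 < γ) :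
    ∃ (C A : ℝ) (D : ℕ), 0 ≤ C ∧ 0 ≤ A ∧ D ≠ 0 ∧ ∀ (t : ι → ℕ) {z : ℚ_[p]}, ‖z‖ ≤ 1 →
      ¬ HasShortVector (Y z) (γ / (2 * Fintype.card ι)) t →
      padicHaar p {x ∈ closedBall 0 1 | HasShortVector (Y x) γ t} ≤
        ENNReal.ofReal (C * (A * ((p : ℝ) ^ ∑ l, t l) ^ (-(γ / 2))) ^ (D : ℝ)⁻¹) := by
  obtain ⟨C, D, hD, hbound⟩ := exists_padicHaar_norm_weighted_lt_le p hY
  set m := Fintype.card ι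
  have hm : m ≠ 0 := Fintype.card_ne_zero
  have hm1 : (1 : ℝ) ≤ m := by exact_mod_cast Nat.one_le_iff_ne_zero.mpr hm
  refine ⟨max C 1, 2 * m * m ^ m, D, by positivity, by positivity, hD, fun t z hz hzt => ?_⟩
  set X : ℝ := (p : ℝ) ^ ∑ l, t l
  have hX1 : 1 ≤ X := one_le_pow₀ (one_lt_prime p).le
  have hX0 := zero_lt_one.trans_le hX1
  rw [← two_mul_rpow_neg_div_eq hX0 hm]
  set η := X ^ (-(γ / (2 * m)))
  have hηm : η ≤ m := (Real.rpow_le_one_of_one_le_of_nonpos hX1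
    (neg_nonpos.mpr (by positivity))).trans hm1
  by_cases hsmall : 2 * m * X ^ (-γ) ≤ (η / m) ^ m
  · refine le_trans (measure_mono ?_) ((hbound t hz (by positivity) hηm (by positivity) hsmall
      fun q hq0 hlin => ?_).trans (ENNReal.ofReal_le_ofReal (by gcongr; exact le_max_left _ _)))
    · rintro x ⟨hx, q, hq0, hlin, hq⟩
      refine ⟨hx, q, hq0, hlin, ?_⟩
      rw [mul_assoc, two_mul]
      exact lt_add_of_pos_of_le (by positivity) (mul_le_mul_of_nonneg_left hq (by positivity))
    · by_contra! hlt
      exact hzt ⟨q, hq0, hlin, hlt.le⟩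
  · refine (measure_mono (Set.sep_subset _ _)).trans ?_
    rw [padicHaar_closedBall_one, ENNReal.one_le_ofReal]
    exact one_le_mul_of_one_le_of_one_le (le_max_right _ _)
      (Real.one_le_rpow ((one_le_div (by positivity)).mpr (not_le.mp hsmall).le) (by positivity))

theorem exists_padicHaar_hasShortVector_le_pow [Nonempty ι]
    (hY : ∀ x, ‖x‖ ≤ 1 → HasSum (fun n => x ^ n • c n) (Y x)) (hγ : 0 < γ) :
    ∃ K r : ℝ, 0 ≤ K ∧ 0 ≤ r ∧ r < 1 ∧ ∀ (t : ι → ℕ) {z : ℚ_[p]}, ‖z‖ ≤ 1 →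
      ¬ HasShortVector (Y z) (γ / (2 * Fintype.card ι)) t →
      padicHaar p {x ∈ closedBall 0 1 | HasShortVector (Y x) γ t} ≤
        ENNReal.ofReal (K * r ^ ∑ l, t l) := by
  obtain ⟨C, A, D, hC, hA, hD, hbound⟩ := exists_padicHaar_hasShortVector_le_rpow hY hγ
  have hp0 := (prime_pos p).le
  refine ⟨C * A ^ (D : ℝ)⁻¹, (p : ℝ) ^ (-(γ / 2) * (D : ℝ)⁻¹), by positivity, by positivity,
    Real.rpow_lt_one_of_one_lt_of_neg (one_lt_prime p) (by rw [neg_mul, neg_lt_zero]; positivity),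
    fun t z hz hzt => (hbound t hz hzt).trans_eq ?_⟩
  rw [Real.mul_rpow hA (by positivity), mul_assoc, ← Real.rpow_mul (by positivity),
    ← Real.rpow_natCast, ← Real.rpow_natCast, ← Real.rpow_mul hp0, ← Real.rpow_mul hp0,
    mul_comm (Nat.cast _ : ℝ)]

theorem padicHaar_infinite_hasShortVector [Nonempty ι]
    (hY : ∀ x, ‖x‖ ≤ 1 → HasSum (fun n => x ^ n • c n) (Y x)) {z : ℚ_[p]} (hz : ‖z‖ ≤ 1)
    (hfin : ∀ ε > 0, (approxSet (Y z) ε).Finite) (hγ : 0 < γ) :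
    padicHaar p {x ∈ closedBall 0 1 | {t | HasShortVector (Y x) γ t}.Infinite} = 0 := by
  obtain ⟨K, r, hK, hr, hr1, hbound⟩ := exists_padicHaar_hasShortVector_le_pow hY hγ
  have hγ₀ : 0 < γ / (2 * Fintype.card ι) := by positivity
  set F := {t | HasShortVector (Y z) (γ / (2 * Fintype.card ι)) t}
  have hF : F.Finite := finite_setOf_hasShortVector hγ₀.le (hfin _ hγ₀)
  let S (t : ι → ℕ) : Set ℚ_[p] := {x ∈ closedBall 0 1 | t ∉ F ∧ HasShortVector (Y x) γ t}
  have hS (t) : padicHaar p (S t) ≤ ENNReal.ofReal (K * r ^ ∑ l, t l) := by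
    by_cases ht : t ∈ F
    · simp [S, ht]
    · simpa only [S, ht, not_false_eq_true, true_and] using hbound t hz ht
  have hlimsup := measure_limsup_cofinite_eq_zero (ne_top_of_le_ne_top
    (tsum_ofReal_mul_pow_sum_ne_top hK hr hr1) (ENNReal.tsum_le_tsum hS))
  rw [cofinite.limsup_set_eq] at hlimsup
  refine measure_mono_null ?_ hlimsup
  rintro x ⟨hx, hinf⟩
  refine (hinf.sdiff hF).mono ?_
  rintro t ⟨ht, htF⟩
  exact ⟨hx, htF, ht⟩

theorem padicHaar_isVWMA_of_hasSum {n : ℕ} {h : ℚ_[p] → Fin n → ℚ_[p]}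
    {c : ℕ → Fin n → ℚ_[p]} (hh : ∀ x, ‖x‖ ≤ 1 → HasSum (fun k => x ^ k • c k) (h x))
    {z : ℚ_[p]} (hz : ‖z‖ ≤ 1) (hw : ¬ IsVWMA p (h z)) :
    padicHaar p {x ∈ closedBall 0 1 | IsVWMA p (h x)} = 0 := by
  have hsum (x : ℚ_[p]) (hx : ‖x‖ ≤ 1) : HasSum
      (fun k => x ^ k • (Fin.cons (if k = 0 then 1 else 0) (c k) : Fin (n + 1) → ℚ_[p]))
      (homogenize (h x)) := by
    refine Pi.hasSum.mpr (Fin.cases ?_ fun i => ?_)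
    · refine (hasSum_ite_eq 0 (1 : ℚ_[p])).congr_fun fun k => ?_
      simp +contextual
    · simpa only [homogenize, Pi.smul_apply, Fin.cons_succ] using Pi.hasSum.mp (hh x hx) i
  simp only [isVWMA_iff_infinite_approxSet, not_exists, not_and, Set.not_infinite] at hw
  have hnull (k : ℕ) := padicHaar_infinite_hasShortVector hsum hz hw
    (γ := 1 / (k + 1)) (by positivity)
  refine measure_mono_null ?_ (measure_iUnion_null hnull)
  rintro x ⟨hx, hv⟩
  obtain ⟨k, hk⟩ := isVWMA_iff_infinite_hasShortVector.mp hv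
  exact Set.mem_iUnion.mpr ⟨k, hx, hk⟩

end PowerSeries

/-! ### From lines to manifolds -/

section Lines

variable {𝕜 E : Type*} [NontriviallyNormedField 𝕜] [NormedAddCommGroup E] [NormedSpace 𝕜 E]

theorem exists_mem_nhds_hasSum_line {F : Type*} [NormedAddCommGroup F] [NormedSpace 𝕜 F]
    {f : E → F} {x₀ : E} (hf : AnalyticAt 𝕜 f x₀) :
    ∃ V ∈ 𝓝 (0 : E), ∀ v ∈ V, ∃ c : ℕ → F, ∀ z : 𝕜, ‖z‖ ≤ 1 →
      HasSum (fun k => z ^ k • c k) (f (x₀ + z • v)) := by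
  obtain ⟨P, r, hP⟩ := hf
  refine ⟨eball 0 r, eball_mem_nhds 0 hP.r_pos, fun v hv => ⟨fun k => P k fun _ => v, ?_⟩⟩
  intro z hz
  have hzv : z • v ∈ eball (0 : E) r := by
    rw [mem_eball, edist_zero_right] at hv ⊢
    rw [enorm_smul]
    refine (mul_le_of_le_one_left' ?_).trans_lt hv
    rw [← ofReal_norm]
    exact ENNReal.ofReal_le_one.mpr hz
  simpa only [ContinuousMultilinearMap.map_smul_univ, Finset.prod_const, Finset.card_univ,
    Fintype.card_fin] using hP.hasSum hzv

variable [MeasurableSpace 𝕜] [BorelSpace 𝕜] [MeasurableSpace E] [BorelSpace E]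
  [SecondCountableTopology E] [LocallyCompactSpace E]

/-- By Fubini some nonzero `z` has `x₀ + z • v ∉ N` for almost every `v ∈ V`, and `v ↦ x₀ + z • v`
preserves null sets. -/
theorem exists_mem_nhds_ae_mem_imp_notMem (ν : Measure 𝕜) [SFinite ν]
    [NullSingletonClass ν] [NeZero ν] (μ : Measure E) [μ.IsAddHaarMeasure] {N V : Set E}
    (hN : MeasurableSet N) {x₀ : E} (hV : V ∈ 𝓝 0) (h : ∀ v ∈ V, ∀ᵐ z ∂ν, x₀ + z • v ∉ N) :
    ∃ W ∈ 𝓝 x₀, ∀ᵐ x ∂μ, x ∈ W → x ∉ N := by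
  obtain ⟨V₀, hV₀V, hV₀, h0⟩ := _root_.mem_nhds_iff.mp hV
  have hmeas : MeasurableSet {zv : 𝕜 × E | x₀ + zv.1 • zv.2 ∉ N} :=
    (by fun_prop : Continuous fun zv : 𝕜 × E => x₀ + zv.1 • zv.2).measurable hN.compl
  have hswap : ∀ᵐ z ∂ν, ∀ᵐ v ∂μ.restrict V₀, x₀ + z • v ∉ N :=
    (Measure.ae_ae_comm (p := fun (z : 𝕜) (v : E) => x₀ + z • v ∉ N) hmeas).mpr
      ((ae_restrict_iff' hV₀.measurableSet).mpr (.of_forall fun v hv => h v (hV₀V hv)))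
  obtain ⟨z, hz, hz0⟩ := (hswap.and (Measure.ae_ne ν 0)).exists
  rw [ae_restrict_iff' hV₀.measurableSet] at hz
  let e : E ≃L[𝕜] E := ContinuousLinearEquiv.smulLeft (Units.mk0 z hz0)
  have he (v : E) : e v = z • v := rfl
  have hquasi : Measure.QuasiMeasurePreserving (fun x => e.symm (x - x₀)) μ μ :=
    Measure.QuasiMeasurePreserving.comp
      ⟨e.symm.continuous.measurable, Measure.absolutelyContinuous_isAddHaarMeasure _ _⟩
      (measurePreserving_sub_right μ x₀).quasiMeasurePreserving
  have hcont : Continuous fun x => e.symm (x - x₀) := by fun_prop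
  refine ⟨_, (hV₀.preimage hcont).mem_nhds (by simpa using h0), ?_⟩
  filter_upwards [hquasi.ae hz] with x hx hxV
  simpa only [← he, e.apply_symm_apply, add_sub_cancel] using hx hxV

end Lines

section Manifold

variable {p} {n : ℕ}

theorem measurableSet_setOf_hasShortVector {ι : Type*} [Fintype ι] (γ : ℝ) (t : ι → ℕ) :
    MeasurableSet {y : ι → ℚ_[p] | HasShortVector y γ t} := by
  have hunion : {y : ι → ℚ_[p] | HasShortVector y γ t} = ⋃ q : ι → ℤ,
      {y | q ≠ 0 ∧ ‖linForm y q‖ ≤ ((p : ℝ) ^ ∑ l, t l)⁻¹ ∧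
        ‖weighted p t q‖ ≤ ((p : ℝ) ^ ∑ l, t l) ^ (-γ)} := by
    ext y
    simp only [HasShortVector, Set.mem_ofPred_eq, Set.mem_iUnion]
  rw [hunion]
  refine .iUnion fun q => (MeasurableSet.const _).inter (.inter ?_ (.const _))
  exact (isClosed_le (continuous_linForm p q).norm continuous_const).measurableSet

theorem measurableSet_setOf_infinite {X α : Type*} [MeasurableSpace X] [Countable α]
    {P : X → α → Prop} (hP : ∀ a, MeasurableSet {x | P x a}) :
    MeasurableSet {x | {a | P x a}.Infinite} := by
  have hinter : {x | {a | P x a}.Infinite} = ⋂ F : Finset α, ⋃ a : (Fᶜ : Set α), {x | P x a} := by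
    ext x
    simp only [Set.mem_iInter, Set.mem_iUnion, Set.mem_ofPred_eq, Subtype.exists]
    refine ⟨fun hx F => ?_, fun hx hfin => ?_⟩
    · obtain ⟨a, ha, haF⟩ := hx.exists_notMem_finset F
      exact ⟨a, by simpa using haF, ha⟩
    · obtain ⟨a, haF, ha⟩ := hx hfin.toFinset
      exact haF (by simpa using ha)
  rw [hinter]
  exact .iInter fun F => .iUnion fun a => hP a

theorem measurableSet_setOf_isVWMA : MeasurableSet {y : Fin n → ℚ_[p] | IsVWMA p y} := by
  have hcont : Continuous (homogenize : (Fin n → ℚ_[p]) → Fin (n + 1) → ℚ_[p]) :=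
    continuous_const.finCons continuous_id
  simp only [isVWMA_iff_infinite_hasShortVector, Set.ofPred_exists]
  exact .iUnion fun k => measurableSet_setOf_infinite fun t =>
    hcont.measurable (measurableSet_setOf_hasShortVector _ t)

theorem exists_mem_nhds_ae_not_isVWMA {d : ℕ} {f : (Fin d → ℚ_[p]) → (Fin n → ℚ_[p])}
    {x₀ : Fin d → ℚ_[p]} (hf : AnalyticAt ℚ_[p] f x₀) (hw : ¬ IsVWMA p (f x₀))
    (μ : Measure (Fin d → ℚ_[p])) [μ.IsAddHaarMeasure] :
    ∃ W ∈ 𝓝 x₀, ∀ᵐ x ∂μ, x ∈ W → ¬ IsVWMA p (f x) := by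
  obtain ⟨U, hU, hUo, hx₀⟩ := _root_.mem_nhds_iff.mp hf.eventually_analyticAt
  obtain ⟨V, hV, hline⟩ := exists_mem_nhds_hasSum_line hf
  have hN : MeasurableSet {x ∈ U | IsVWMA p (f x)} := by
    have hcont : ContinuousOn f U := fun x hx => (hU hx).continuousAt.continuousWithinAt
    have hpre := hcont.domRestrict.measurable (measurableSet_setOf_isVWMA (p := p) (n := n))
    have himage := hUo.measurableSet.subtype_image hpre
    rwa [Set.domRestrict_eq, Set.preimage_comp, Subtype.image_preimage_coe] at himage
  have hball : padicHaar p (closedBall 0 1) ≠ 0 := by simp [padicHaar_closedBall_one]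
  have : NeZero ((padicHaar p).restrict (closedBall 0 1)) := ⟨by simpa using hball⟩
  obtain ⟨W, hW, hWN⟩ := exists_mem_nhds_ae_mem_imp_notMem
    ((padicHaar p).restrict (closedBall 0 1)) μ hN hV fun v hv => by
      obtain ⟨c, hc⟩ := hline v hv
      have hnull := padicHaar_isVWMA_of_hasSum hc (z := 0) (by simp) (by simpa using hw)
      rw [ae_restrict_iff' isClosed_closedBall.measurableSet]
      filter_upwards [measure_eq_zero_iff_ae_notMem.mp hnull] with z hz hz1 hzN
      exact hz ⟨hz1, hzN.2⟩
  refine ⟨W ∩ U, inter_mem hW (hUo.mem_nhds hx₀), ?_⟩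
  filter_upwards [hWN] with x hx hxWU hxV
  exact hx hxWU.1 ⟨hxWU.2, hxV⟩

end Manifold

theorem statement10_general {n d : ℕ} {U : Set (Fin d → ℚ_[p])}
    {f : (Fin d → ℚ_[p]) → (Fin n → ℚ_[p])} {x₀ : Fin d → ℚ_[p]} (hU : U ∈ 𝓝 x₀)
    (hf : AnalyticAt ℚ_[p] f x₀) (hw : ¬ IsVWMA p (f x₀))
    (μ : Measure (Fin d → ℚ_[p])) [μ.IsAddHaarMeasure] :
    0 < μ {x ∈ U | ¬ IsVWMA p (f x)} := by
  obtain ⟨W, hW, hae⟩ := exists_mem_nhds_ae_not_isVWMA hf hw μ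
  refine (Measure.measure_pos_of_mem_nhds μ (inter_mem hU hW)).trans_le (measure_mono_ae ?_)
  filter_upwards [hae] with x hx hxUW
  exact ⟨hxUW.1, hx hxUW.2⟩

/-- If `M ⊆ ℚ_p^n` is an analytic submanifold and some `y₀ ∈ M` is not
very well multiplicatively approximable, then the set of not VWMA points of `M` has
positive measure w.r.t. the smooth measure class on `M`. -/
theorem statement10 (p : ℕ) [Fact p.Prime] (n d : ℕ) (hn : 1 ≤ n)
    (M : Set (Fin n → ℚ_[p])) (hM : IsAnalyticSubmanifold p d n M)
    (y₀ : Fin n → ℚ_[p]) (hy₀ : y₀ ∈ M) (hw : ¬ IsVWMA p y₀) :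
    ∃ (U : Set (Fin d → ℚ_[p])) (f : (Fin d → ℚ_[p]) → (Fin n → ℚ_[p])),
      IsChart p d n M U f ∧
      ∀ (μ : Measure (Fin d → ℚ_[p])), μ.IsAddHaarMeasure →
        0 < μ {x ∈ U | ¬ IsVWMA p (f x)} := by
  obtain ⟨U, f, hchart, x₀, hx₀, rfl⟩ := hM.2 y₀ hy₀
  exact ⟨U, f, hchart, fun μ _ =>
    statement10_general p (hchart.1.mem_nhds hx₀) (hchart.2.1 x₀ hx₀) hw μ⟩

end PadicDioph
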